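/- arXiv:2104.12729 — 12 statements merged into one kernel-verified Lean document; each statement's English description precedes it below -/
import Mathlib

section
/- Let n ≥ 4 be a natural number. Every element g of the alternating group on n letters can be written as a product of two squares of elements of the alternating group: there exist h and t in alternatingGroup (Fin n) such that g = h^2 * t^2. (Hence the verbal width of A_n with respect to the set of squares is at most 2.) -/
/-!
An element of odd order `2 * k + 1` is the square of its own `(k + 1)`-st power, so it suffices to
write an even permutation as a product of two permutations of odd order. Such splittings of disjoint
permutations can be multiplied, provided the factors stay inside the supports. A cycle of odd length
splits trivially. The cycles of even length in an even permutation can be paired off, and for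
disjoint cycles `c ∋ x` and `d ∋ y` of even length, `swap x y * (c * d)` is a single cycle of even
length in which `x` is followed by `c x`; removing `x` from it by a second transposition leaves a
cycle of odd length, and the two transpositions compose to a 3-cycle.
-/

open Equiv Equiv.Perm

theorem isSquare_of_odd_orderOf {M : Type*} [Monoid M] {a : M} (ha : Odd (orderOf a)) :
    IsSquare a := by
  obtain ⟨k, hk⟩ := exists_pow_eq_self_of_coprime (Nat.coprime_two_left.2 ha)
  exact hk ▸ (IsSquare.sq a).pow k

theorem odd_orderOf_mul_of_commute {M : Type*} [Monoid M] {a b : M} (h : Commute a b)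
    (ha : Odd (orderOf a)) (hb : Odd (orderOf b)) : Odd (orderOf (a * b)) :=
  (ha.mul hb).of_dvd_nat h.orderOf_mul_dvd_mul_orderOf

theorem disjoint_mul_right_iff {α : Type*} {f g h : Perm α} (hgh : g.Disjoint h) :
    f.Disjoint (g * h) ↔ f.Disjoint g ∧ f.Disjoint h := by
  simp only [Perm.Disjoint, hgh.mul_apply_eq_iff, or_and_left, forall_and]

section FormPerm

variable {α : Type*} [DecidableEq α]

theorem formPerm_append_cons (l m : List α) (y : α) :
    (l ++ y :: m).formPerm = (l ++ [y]).formPerm * (y :: m).formPerm := by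
  induction l with
  | nil => simp
  | cons x l ih =>
    cases l with
    | nil => simp [List.formPerm_cons_cons]
    | cons z l =>
      simp only [List.cons_append, List.formPerm_cons_cons] at ih ⊢
      rw [ih, mul_assoc]

theorem swap_mul_formPerm_mul_formPerm {x y : α} {l : List α} (hl : (y :: x :: l).Nodup)
    (m : List α) :
    swap x y * ((x :: l).formPerm * (y :: m).formPerm) = (x :: l ++ y :: m).formPerm := by
  have hrotate : (x :: l ++ [y]).formPerm = swap x y * (x :: l).formPerm := by
    rw [swap_comm, ← List.formPerm_cons_cons, ← List.formPerm_rotate_one _ hl,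
      List.rotate_cons_succ, List.rotate_zero]
  rw [formPerm_append_cons, hrotate, mul_assoc]

end FormPerm

section Perm

variable {α : Type*} [Fintype α] [DecidableEq α]

theorem sign_eq_one_of_odd_orderOf {a : Perm α} (ha : Odd (orderOf a)) : sign a = 1 := by
  obtain ⟨r, rfl⟩ := isSquare_of_odd_orderOf ha
  rw [map_mul, Int.units_mul_self]

theorem odd_orderOf_of_isCycle_of_sign_eq_one {c : Perm α} (hc : c.IsCycle) (hs : sign c = 1) :
    Odd (orderOf c) := by
  rw [hc.orderOf]
  by_contra heven
  rw [hc.sign, (Nat.not_odd_iff_even.1 heven).neg_one_pow] at hs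
  exact absurd hs (by decide)

theorem exists_toList_eq_cons {f : Perm α} {x : α} (hx : f x ≠ x) :
    ∃ l, f.toList x = x :: l := by
  have hmem : x ∈ f.support := mem_support.2 hx
  obtain ⟨z, l, hl⟩ := List.exists_cons_of_ne_nil (toList_eq_nil_iff.not_left.2 hmem)
  have hhead := toList_getElem_zero f x hmem
  simp only [hl, List.getElem_cons_zero] at hhead
  exact ⟨l, hhead ▸ hl⟩

theorem formPerm_toList_of_isCycle {c : Perm α} (hc : c.IsCycle) {x : α} (hx : c x ≠ x) :
    (c.toList x).formPerm = c := by
  rw [formPerm_toList, hc.cycleOf_eq hx]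

theorem disjoint_toList {c d : Perm α} (hcd : c.Disjoint d) (x y : α) :
    (c.toList x).Disjoint (d.toList y) := by
  intro z hzc hzd
  obtain ⟨hxz, hx⟩ := mem_toList_iff.1 hzc
  obtain ⟨hyz, hy⟩ := mem_toList_iff.1 hzd
  exact Finset.disjoint_left.1 hcd.disjoint_support (hxz.mem_support_iff.1 hx)
    (hyz.mem_support_iff.1 hy)

end Perm

section MergeCycles

variable {α : Type*} [Finite α] [DecidableEq α]

theorem isCycle_swap_mul_mul {c d : Perm α} (hc : c.IsCycle) (hd : d.IsCycle)
    (hcd : c.Disjoint d) {x y : α} (hx : c x ≠ x) (hy : d y ≠ y) :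
    (swap x y * (c * d)).IsCycle := by
  cases nonempty_fintype α
  obtain ⟨l, hl⟩ := exists_toList_eq_cons hx
  obtain ⟨m, hm⟩ := exists_toList_eq_cons hy
  have hnodup : (x :: l ++ y :: m).Nodup := by
    rw [← hl, ← hm]
    exact (nodup_toList c x).append (nodup_toList d y) (disjoint_toList hcd x y)
  have hnodup_cons : (y :: x :: l).Nodup :=
    (List.nodup_middle.1 hnodup).sublist (by simp)
  rw [← formPerm_toList_of_isCycle hc hx, ← formPerm_toList_of_isCycle hd hy, hl, hm,
    swap_mul_formPerm_mul_formPerm hnodup_cons]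
  exact List.isCycle_formPerm hnodup (by simp; omega)

theorem isCycle_swap_mul_swap_mul_mul {c d : Perm α} (hc : c.IsCycle) (hd : d.IsCycle)
    (hcd : c.Disjoint d) {x y : α} (hx : c x ≠ x) (hy : d y ≠ y) :
    (swap x (c x) * (swap x y * (c * d))).IsCycle := by
  have hcy : c y = y := (hcd y).resolve_right hy
  have hdx : d x = x := (hcd x).resolve_left hx
  have hdcx : d (c x) = c x := (hcd (c x)).resolve_left (c.injective.ne hx)
  have hxy : x ≠ y := fun h => hx (h ▸ hcy)
  have hcxy : c x ≠ y := (c.injective.ne hxy).trans_eq hcy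
  have hccxy : c (c x) ≠ y := (c.injective.ne hcxy).trans_eq hcy
  have hnext : (swap x y * (c * d)) x = c x := by
    rw [mul_apply, mul_apply, hdx, swap_apply_of_ne_of_ne hx hcxy]
  have hnext_next : (swap x y * (c * d)) (c x) ≠ x := by
    rw [mul_apply, mul_apply, hdcx, Ne, swap_apply_eq_iff, swap_apply_left]
    exact hccxy
  have hremove_x := (isCycle_swap_mul_mul hc hd hcd hx hy).swap_mul (x := x)
  rw [hnext] at hremove_x
  exact hremove_x hx hnext_next

end MergeCycles

section OddOrderSplit

variable {α : Type*} [Fintype α] [DecidableEq α]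

/-- A permutation is a product of two permutations of odd order. The supports of the two factors are
required to lie in that of the product, so that factors of disjoint permutations commute. -/
def OddOrderSplit (g : Perm α) : Prop :=
  ∃ a b : Perm α, g = a * b ∧ Odd (orderOf a) ∧ Odd (orderOf b) ∧
    a.support ⊆ g.support ∧ b.support ⊆ g.support

namespace OddOrderSplit

theorem of_odd_orderOf {g : Perm α} (hg : Odd (orderOf g)) : OddOrderSplit g :=
  ⟨g, 1, (mul_one g).symm, hg, by simp, subset_rfl, by simp⟩

theorem one : OddOrderSplit (1 : Perm α) :=
  of_odd_orderOf (by simp)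

theorem sign_eq_one {g : Perm α} (hg : OddOrderSplit g) : sign g = 1 := by
  obtain ⟨a, b, rfl, ha, hb, -, -⟩ := hg
  rw [map_mul, sign_eq_one_of_odd_orderOf ha, sign_eq_one_of_odd_orderOf hb, one_mul]

theorem mul {f g : Perm α} (hf : OddOrderSplit f) (hg : OddOrderSplit g) (hfg : f.Disjoint g) :
    OddOrderSplit (f * g) := by
  obtain ⟨a, b, hab, ha, hb, hsa, hsb⟩ := hf
  obtain ⟨a', b', hab', ha', hb', hsa', hsb'⟩ := hg
  have hcomm_a : Commute a a' := (hfg.mono hsa hsa').commute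
  have hcomm_b : Commute b b' := (hfg.mono hsb hsb').commute
  have hcomm_ba : Commute b a' := (hfg.mono hsb hsa').commute
  refine ⟨a * a', b * b', ?_, odd_orderOf_mul_of_commute hcomm_a ha ha',
    odd_orderOf_mul_of_commute hcomm_b hb hb', ?_, ?_⟩
  · rw [hab, hab', hcomm_ba.mul_mul_mul_comm]
  · rw [hfg.support_mul]
    exact (support_mul_le a a').trans (Finset.union_subset_union hsa hsa')
  · rw [hfg.support_mul]
    exact (support_mul_le b b').trans (Finset.union_subset_union hsb hsb')

theorem of_support_left_subset {a b : Perm α} (ha : Odd (orderOf a)) (hb : Odd (orderOf b))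
    (hs : a.support ⊆ (a * b).support) : OddOrderSplit (a * b) := by
  refine ⟨a, b, rfl, ha, hb, hs, ?_⟩
  calc b.support = (a⁻¹ * (a * b)).support := by rw [inv_mul_cancel_left]
    _ ⊆ a⁻¹.support ∪ (a * b).support := support_mul_le _ _
    _ ⊆ (a * b).support := Finset.union_subset (by rwa [support_inv]) subset_rfl

theorem mul_of_isCycle_of_sign_eq_neg_one {c d : Perm α} (hc : c.IsCycle) (hd : d.IsCycle)
    (hcd : c.Disjoint d) (hcs : sign c = -1) (hds : sign d = -1) : OddOrderSplit (c * d) := by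
  obtain ⟨x, hx, -⟩ := id hc
  obtain ⟨y, hy, -⟩ := id hd
  have hcy : c y = y := (hcd y).resolve_right hy
  have hxy : x ≠ y := fun h => hx (h ▸ hcy)
  have hcxy : c x ≠ y := (c.injective.ne hxy).trans_eq hcy
  set a := swap x y * swap x (c x) with ha
  set b := swap x (c x) * (swap x y * (c * d)) with hb
  have ha_three : a.IsThreeCycle := isThreeCycle_swap_mul_swap_same hxy hx.symm hcxy.symm
  have ha_odd : Odd (orderOf a) := ha_three.orderOf ▸ by decide
  have hb_odd : Odd (orderOf b) := by
    refine odd_orderOf_of_isCycle_of_sign_eq_one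
      (isCycle_swap_mul_swap_mul_mul hc hd hcd hx hy) ?_
    rw [hb]
    simp only [map_mul, sign_swap hx.symm, sign_swap hxy, hcs, hds]
    decide
  have hab : c * d = a * b := by
    rw [ha, hb, mul_assoc, swap_mul_self_mul, swap_mul_self_mul]
  have ha_support : a.support ⊆ (c * d).support := by
    rw [ha, swap_comm x y, support_swap_mul_swap (by simp [hxy.symm, hcxy.symm, hx.symm]),
      hcd.support_mul]
    simp [Finset.insert_subset_iff, hx, hy]
  rw [hab] at ha_support ⊢
  exact of_support_left_subset ha_odd hb_odd ha_support

end OddOrderSplit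

theorem oddOrderSplit_or_sign_eq_neg_one_of_isCycle {c : Perm α} (hc : c.IsCycle) :
    OddOrderSplit c ∨ sign c = -1 :=
  (Int.units_eq_one_or (sign c)).imp_left fun hs =>
    .of_odd_orderOf (odd_orderOf_of_isCycle_of_sign_eq_one hc hs)

-- The second alternative carries the one even-length cycle that has not yet found a partner.
theorem oddOrderSplit_or_exists_isCycle_mul (g : Perm α) :
    OddOrderSplit g ∨ ∃ c h : Perm α, g = c * h ∧ c.IsCycle ∧ sign c = -1 ∧ c.Disjoint h ∧
      OddOrderSplit h := by
  induction g using cycle_induction_on with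
  | base_one => exact .inl .one
  | base_cycles c hc =>
    exact (oddOrderSplit_or_sign_eq_neg_one_of_isCycle hc).imp_right fun hs =>
      ⟨c, 1, (mul_one c).symm, hc, hs, disjoint_one_right c, .one⟩
  | induction_disjoint σ τ hστ hσ _ hτ =>
    rcases hτ with hτ | ⟨c, h, rfl, hc, hcs, hch, hh⟩
    · exact (oddOrderSplit_or_sign_eq_neg_one_of_isCycle hσ).imp (·.mul hτ hστ) fun hσs =>
        ⟨σ, τ, rfl, hσ, hσs, hστ, hτ⟩
    · obtain ⟨hσc, hσh⟩ := (disjoint_mul_right_iff hch).1 hστ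
      rcases oddOrderSplit_or_sign_eq_neg_one_of_isCycle hσ with hσ_split | hσs
      · refine .inr ⟨c, σ * h, ?_, hc, hcs, hσc.symm.mul_right hch, hσ_split.mul hh hσh⟩
        exact hσc.commute.left_comm h
      · rw [← mul_assoc]
        exact .inl ((OddOrderSplit.mul_of_isCycle_of_sign_eq_neg_one hσ hc hσc hσs hcs).mul hh
          (hσh.mul_left hch))

theorem oddOrderSplit_iff_sign_eq_one {g : Perm α} : OddOrderSplit g ↔ sign g = 1 := by
  refine ⟨OddOrderSplit.sign_eq_one, fun hg => ?_⟩
  refine (oddOrderSplit_or_exists_isCycle_mul g).resolve_right ?_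
  rintro ⟨c, h, rfl, -, hc, -, hh⟩
  rw [map_mul, hc, hh.sign_eq_one] at hg
  exact absurd hg (by decide)

end OddOrderSplit

theorem alternating_group_width_by_squares_le_two_general {α : Type*} [Fintype α] [DecidableEq α]
    (g : alternatingGroup α) : ∃ h t : alternatingGroup α, g = h ^ 2 * t ^ 2 := by
  obtain ⟨g, hg⟩ := g
  obtain ⟨a, b, rfl, ha, hb, -, -⟩ := oddOrderSplit_iff_sign_eq_one.2 (mem_alternatingGroup.1 hg)
  lift a to alternatingGroup α using mem_alternatingGroup.2 (sign_eq_one_of_odd_orderOf ha)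
  lift b to alternatingGroup α using mem_alternatingGroup.2 (sign_eq_one_of_odd_orderOf hb)
  rw [Subgroup.orderOf_coe] at ha hb
  obtain ⟨h, rfl⟩ := (isSquare_iff_exists_sq a).1 (isSquare_of_odd_orderOf ha)
  obtain ⟨t, rfl⟩ := (isSquare_iff_exists_sq b).1 (isSquare_of_odd_orderOf hb)
  exact ⟨h, t, rfl⟩

theorem alternating_group_width_by_squares_le_two (n : ℕ) (hn : 4 ≤ n)
    (g : alternatingGroup (Fin n)) :
    ∃ h t : alternatingGroup (Fin n), g = h ^ 2 * t ^ 2 :=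
  alternating_group_width_by_squares_le_two_general g
end

section
/- For every natural number n ≥ 4 there exists an element g of the alternating group alternatingGroup (Fin n) that is not the square of any element of alternatingGroup (Fin n), i.e. there is no h in alternatingGroup (Fin n) with h^2 = g. (Hence the verbal width of A_n by squares is exactly 2 and not 1.) -/
/-!
In a finite group whose order shares a prime factor `p` with `k`, an element of order `p` (Cauchy)
has the same `k`-th power as `1`. So the `k`-th power map is not injective, hence, by finiteness,
not surjective. For squares in `A_n` it remains to see that `n! / 2` is even once `4 ∣ n!`.
-/

section PowerMap

variable {G : Type*} [Group G] [Finite G] {k : ℕ}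

theorem not_injective_pow_of_not_coprime_card (hk : ¬ (Nat.card G).Coprime k) :
    ¬ Function.Injective fun g : G ↦ g ^ k := by
  intro pow_injective
  obtain ⟨p, hp, p_dvd_card, p_dvd_k⟩ := Nat.Prime.not_coprime_iff_dvd.mp hk
  have : Fact p.Prime := ⟨hp⟩
  obtain ⟨g, orderOf_g⟩ := exists_prime_orderOf_dvd_card' p p_dvd_card
  have g_pow_k : g ^ k = 1 := orderOf_dvd_iff_pow_eq_one.mp (orderOf_g ▸ p_dvd_k)
  have g_eq_one : g = 1 := pow_injective (g_pow_k.trans (one_pow k).symm)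
  exact hp.ne_one (orderOf_g ▸ orderOf_eq_one_iff.mpr g_eq_one)

theorem exists_forall_pow_ne_of_not_coprime_card (hk : ¬ (Nat.card G).Coprime k) :
    ∃ g : G, ∀ h : G, h ^ k ≠ g := by
  have not_surjective : ¬ Function.Surjective fun g : G ↦ g ^ k :=
    mt Finite.injective_iff_surjective.mpr (not_injective_pow_of_not_coprime_card hk)
  simpa only [Function.Surjective, not_forall, not_exists] using not_surjective

end PowerMap

section AlternatingGroup

open scoped Nat

variable {α : Type*} [Fintype α] [DecidableEq α]

theorem two_dvd_nat_card_alternatingGroup (hα : 4 ≤ Nat.card α) :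
    2 ∣ Nat.card (alternatingGroup α) := by
  have : Nontrivial α := Finite.one_lt_card_iff_nontrivial.mp (by lia)
  have four_dvd_factorial : 2 * 2 ∣ (Nat.card α)! := Nat.dvd_factorial four_pos hα
  rw [← Nat.card_perm, ← two_mul_nat_card_alternatingGroup] at four_dvd_factorial
  exact Nat.dvd_of_mul_dvd_mul_left two_pos four_dvd_factorial

theorem exists_nonsquare_in_alternating_group_general (hα : 4 ≤ Nat.card α) :
    ∃ g : alternatingGroup α, ∀ h : alternatingGroup α, h ^ 2 ≠ g :=
  exists_forall_pow_ne_of_not_coprime_card <|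
    Nat.not_coprime_of_dvd_of_dvd one_lt_two (two_dvd_nat_card_alternatingGroup hα) dvd_rfl

end AlternatingGroup

theorem exists_nonsquare_in_alternating_group (n : ℕ) (hn : 4 ≤ n) :
    ∃ g : alternatingGroup (Fin n), ∀ h : alternatingGroup (Fin n), h ^ 2 ≠ g :=
  exists_nonsquare_in_alternating_group_general (hn.trans_eq (Nat.card_fin n).symm)
end

section
/- Criterion for squareness in A_n: let g be an element of alternatingGroup (Fin n), viewed as a permutation of Fin n. Then there exists h in alternatingGroup (Fin n) with h^2 = g if and only if both of the following hold: (1) for every even natural number l, the multiplicity of l in Equiv.Perm.cycleType g is even; and (2) at least one of: (a) g has at least two fixed points, i.e. n - (Equiv.Perm.support g).card ≥ 2; (b) some odd length l occurs with multiplicity at least 2 in Equiv.Perm.cycleType g; (c) the total number of even-length cycles of g (the cardinality of the multiset of even entries of Equiv.Perm.cycleType g) is divisible by 4 (equivalently, the sum over even l of half the multiplicity of l is even). -/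
/-!
Count a fixed point as a cycle of length `1`. Squaring splits a cycle of even length `2 * l` into
two cycles of length `l` and preserves the length of an odd cycle, so `g` is a square exactly when
its even cycle lengths have even multiplicity. A square root of `g` is even when it has an even
number of even cycles, and its only freedom is how it treats odd lengths: if some odd length `l`
(possibly `l = 1`) is repeated in `g`, then two `l`-cycles of the root can be traded for a
`2 * l`-cycle or conversely, which corrects the parity. Otherwise every even cycle of a root has
length divisible by `4`, so `g` has exactly twice as many even cycles as the root.
-/

open Equiv Equiv.Perm

/-- The lengths, fixed points included, of the cycles of the `k`-th power of a permutation whose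
cycles, fixed points included, have the lengths in `M`: a cycle of length `a` breaks up into
`gcd a k` cycles of length `a / gcd a k`. -/
def powParts (k : ℕ) (M : Multiset ℕ) : Multiset ℕ :=
  M.bind fun a ↦ Multiset.replicate (a.gcd k) (a / a.gcd k)

section PowParts

variable {k p : ℕ} {M N : Multiset ℕ}

lemma powParts_add (k : ℕ) (M N : Multiset ℕ) :
    powParts k (M + N) = powParts k M + powParts k N :=
  Multiset.add_bind ..

lemma powParts_cons (k a : ℕ) (M : Multiset ℕ) :
    powParts k (a ::ₘ M) = Multiset.replicate (a.gcd k) (a / a.gcd k) + powParts k M :=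
  Multiset.cons_bind ..

lemma sum_powParts (k : ℕ) (M : Multiset ℕ) : (powParts k M).sum = M.sum := by
  simp [powParts, Multiset.sum_bind, Nat.mul_div_cancel' (Nat.gcd_dvd_left _ _)]

lemma powParts_of_coprime (hM : ∀ a ∈ M, a.Coprime k) : powParts k M = M := by
  calc powParts k M = M.bind fun a ↦ {a} :=
        Multiset.bind_congr fun a ha ↦ by simp [(hM a ha).gcd_eq_one]
    _ = M := by rw [Multiset.bind_singleton, Multiset.map_id']

lemma powParts_map_mul_left (hk : k ≠ 0) (M : Multiset ℕ) :
    powParts k (M.map (k * ·)) = k • M := by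
  induction M using Multiset.induction_on with
  | empty => simp [powParts]
  | cons a M ih =>
    rw [Multiset.map_cons, powParts_cons, ih, Nat.gcd_mul_right_left,
      Nat.mul_div_cancel_left a (Nat.pos_of_ne_zero hk), ← Multiset.nsmul_singleton, ← nsmul_add,
      Multiset.singleton_add]

lemma zero_notMem_of_powParts (hk : k ≠ 0) (hM : 0 ∉ powParts k M) : 0 ∉ M := fun h ↦
  hM <| Multiset.mem_bind.2 ⟨0, h, by simpa using Multiset.mem_replicate.2 ⟨hk, rfl⟩⟩

lemma zero_notMem_powParts (hM : 0 ∉ M) : 0 ∉ powParts k M := by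
  intro h
  obtain ⟨a, ha, h0⟩ := Multiset.mem_bind.1 h
  have ha0 : 0 < a := Nat.pos_of_ne_zero fun h ↦ hM (h ▸ ha)
  exact (Nat.div_gcd_pos_of_pos_left k ha0).ne (Multiset.eq_of_mem_replicate h0)

lemma dvd_count_powParts (hp : p.Prime) {l : ℕ} (hl : p ∣ l) (M : Multiset ℕ) :
    p ∣ (powParts p M).count l := by
  rw [powParts, Multiset.count_bind]
  refine Multiset.dvd_sum fun c hc ↦ ?_
  obtain ⟨a, -, rfl⟩ := Multiset.mem_map.1 hc
  rw [Multiset.count_replicate]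
  split_ifs with h
  · by_cases hpa : p ∣ a
    · exact Nat.dvd_gcd hpa dvd_rfl
    · rw [((hp.coprime_iff_not_dvd.2 hpa).symm).gcd_eq_one, Nat.div_one] at h
      exact absurd (h ▸ hl) hpa
  · exact dvd_zero p

lemma card_filter_dvd_powParts (hp : p.Prime) (hM : ∀ a ∈ M, p ∣ a → p ^ 2 ∣ a) :
    ((powParts p M).filter (p ∣ ·)).card = p * (M.filter (p ∣ ·)).card := by
  induction M using Multiset.induction_on with
  | empty => simp [powParts]
  | cons a M ih =>
    rw [powParts_cons, Multiset.filter_add, Multiset.card_add,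
      ih fun b hb ↦ hM b (Multiset.mem_cons_of_mem hb)]
    by_cases hpa : p ∣ a
    · obtain ⟨b, rfl⟩ := hM a (Multiset.mem_cons_self a M) hpa
      have hdiv : p ^ 2 * b / p = p * b := by
        rw [pow_two, mul_assoc, Nat.mul_div_cancel_left _ hp.pos]
      rw [Nat.gcd_eq_right hpa, hdiv, Multiset.filter_cons_of_pos _ hpa,
        Multiset.filter_eq_self.2 fun c hc ↦ Multiset.eq_of_mem_replicate hc ▸ dvd_mul_right p b,
        Multiset.card_replicate, Multiset.card_cons]
      ring
    · simp [((hp.coprime_iff_not_dvd.2 hpa).symm).gcd_eq_one, hpa]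

lemma sq_dvd_of_count_powParts_lt (hp : p.Prime)
    (hM : ∀ l, ¬ p ∣ l → (powParts p M).count l < p) {a : ℕ} (ha : a ∈ M) (hpa : p ∣ a) :
    p ^ 2 ∣ a := by
  obtain ⟨l, rfl⟩ := hpa
  rw [pow_two]
  refine mul_dvd_mul_left p (not_imp_comm.1 (hM l) (not_lt.2 ?_))
  obtain ⟨N, rfl⟩ := Multiset.exists_cons_of_mem ha
  rw [powParts_cons, Nat.gcd_mul_right_left, Nat.mul_div_cancel_left l hp.pos, Multiset.count_add,
    Multiset.count_replicate_self]
  exact Nat.le_add_right ..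

lemma exists_powParts_eq_of_dvd_count (hp : p.Prime) (hN : ∀ l, p ∣ l → p ∣ N.count l) :
    ∃ M, powParts p M = N ∧ ∀ a ∈ M, p ∣ a → p ^ 2 ∣ a := by
  obtain ⟨E, hE⟩ : ∃ E, N.filter (p ∣ ·) = p • E :=
    Multiset.exists_smul_of_dvd_count _ fun a ha ↦ by
      have hpa := Multiset.of_mem_filter ha
      rw [Multiset.count_filter_of_pos hpa]
      exact hN a hpa
  have dvd_of_mem : ∀ a ∈ E, p ∣ a := fun a ha ↦
    Multiset.of_mem_filter (hE ▸ Multiset.mem_nsmul.2 ⟨hp.ne_zero, ha⟩ : a ∈ N.filter (p ∣ ·))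
  refine ⟨E.map (p * ·) + N.filter fun a ↦ ¬ p ∣ a, ?_, fun a ha hpa ↦ ?_⟩
  · rw [powParts_add, powParts_map_mul_left hp.ne_zero, powParts_of_coprime fun a ha ↦
      (hp.coprime_iff_not_dvd.2 (Multiset.mem_filter.1 ha).2).symm, ← hE, Multiset.filter_add_not]
  · rcases Multiset.mem_add.1 ha with ha | ha
    · obtain ⟨b, hb, rfl⟩ := Multiset.mem_map.1 ha
      rw [pow_two]
      exact mul_dvd_mul_left p (dvd_of_mem b hb)
    · exact absurd hpa (Multiset.mem_filter.1 ha).2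

end PowParts

section SquareRoots

variable {N : Multiset ℕ}

lemma exists_powParts_two_eq_and_even_of_odd (hN : ∀ l, 2 ∣ l → 2 ∣ N.count l) {l : ℕ} (hl : Odd l)
    (hlN : 2 ≤ N.count l) :
    ∃ M, powParts 2 M = N ∧ Even (M.filter (2 ∣ ·)).card := by
  obtain ⟨P, rfl⟩ := Multiset.le_iff_exists_add.1 (Multiset.le_count_iff_replicate_le.1 hlN)
  have hP : ∀ m, 2 ∣ m → 2 ∣ P.count m := fun m hm ↦ by
    have hml : l ≠ m := by grind
    simpa only [Multiset.count_add, Multiset.count_replicate, if_neg hml, zero_add] using hN m hm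
  obtain ⟨M, rfl, -⟩ := exists_powParts_eq_of_dvd_count Nat.prime_two hP
  have hl2 : ¬ 2 ∣ l := by grind
  by_cases hM : Even (M.filter (2 ∣ ·)).card
  · refine ⟨Multiset.replicate 2 l + M, ?_, ?_⟩
    · rw [powParts_add, powParts_of_coprime fun a ha ↦
        Multiset.eq_of_mem_replicate ha ▸ hl.coprime_two_right]
    · simpa [Multiset.filter_add, Multiset.filter_eq_nil, hl2, Multiset.replicate_succ] using hM
  · refine ⟨2 * l ::ₘ M, by simp [powParts_cons], ?_⟩
    simpa using (Nat.not_even_iff_odd.1 hM).add_one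

theorem exists_powParts_two_eq_and_even_iff :
    (∃ M, powParts 2 M = N ∧ Even (M.filter (2 ∣ ·)).card) ↔
      (∀ l, 2 ∣ l → 2 ∣ N.count l) ∧
        ((∃ l, Odd l ∧ 2 ≤ N.count l) ∨ 4 ∣ (N.filter (2 ∣ ·)).card) := by
  constructor
  · rintro ⟨M, rfl, hM⟩
    refine ⟨fun l hl ↦ dvd_count_powParts Nat.prime_two hl M, or_iff_not_imp_left.2 fun h ↦ ?_⟩
    push Not at h
    rw [card_filter_dvd_powParts Nat.prime_two fun a ↦
      sq_dvd_of_count_powParts_lt Nat.prime_two fun l hl ↦ h l (by grind)]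
    exact mul_dvd_mul_left 2 hM.two_dvd
  · rintro ⟨hN, ⟨l, hl, hlN⟩ | h4⟩
    · exact exists_powParts_two_eq_and_even_of_odd hN hl hlN
    · obtain ⟨M, rfl, hM⟩ := exists_powParts_eq_of_dvd_count Nat.prime_two hN
      rw [card_filter_dvd_powParts Nat.prime_two hM] at h4
      exact ⟨M, rfl, even_iff_two_dvd.2 (Nat.dvd_of_mul_dvd_mul_left two_pos h4)⟩

end SquareRoots

lemma even_sum_add_card_iff (M : Multiset ℕ) :
    Even (M.sum + M.card) ↔ Even (M.filter (2 ∣ ·)).card := by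
  induction M using Multiset.induction_on with
  | empty => simp
  | cons a M ih =>
    rw [Multiset.sum_cons, Multiset.card_cons]
    by_cases ha : 2 ∣ a
    · rw [Multiset.filter_cons_of_pos _ ha, Multiset.card_cons]
      grind
    · rw [Multiset.filter_cons_of_neg _ ha]
      grind

section CycleType

variable {α : Type*} [Fintype α] [DecidableEq α] {c σ : Perm α}

lemma eq_orderOf_pow_of_mem_cycleType_pow (hc : c.IsCycle) {k l : ℕ}
    (hl : l ∈ (c ^ k).cycleType) : l = orderOf (c ^ k) := by
  refine Nat.dvd_antisymm (dvd_of_mem_cycleType hl) (orderOf_dvd_of_pow_eq_one ?_)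
  rw [cycleType_def, Multiset.mem_map] at hl
  obtain ⟨τ, hτ, rfl⟩ := hl
  obtain ⟨τ_cycle, -⟩ := mem_cycleFactorsFinset_iff.1 hτ
  obtain ⟨x, hx⟩ := τ_cycle.nonempty_support
  have moved : c x ≠ x := by
    rw [← mem_support]
    exact support_pow_le c k (mem_cycleFactorsFinset_support_le hτ hx)
  have period : ((c ^ k) ^ τ.support.card) x = x := by
    rw [← cycleOf_pow_apply_self, ← cycle_is_cycleOf hx hτ, ← τ_cycle.orderOf, pow_orderOf_eq_one,
      one_apply]
  rw [← pow_mul] at period ⊢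
  exact hc.pow_eq_one_iff.2 ⟨x, moved, period⟩

lemma cycleType_pow_of_isCycle (hc : c.IsCycle) (k : ℕ) :
    (c ^ k).cycleType = (powParts k {c.support.card}).filter (2 ≤ ·) := by
  have order : orderOf (c ^ k) = c.support.card / c.support.card.gcd k := by
    rw [orderOf_pow, hc.orderOf]
  rw [powParts, Multiset.singleton_bind, ← order]
  by_cases hk : c ^ k = 1
  · rw [hk, cycleType_one, orderOf_one, eq_comm, Multiset.filter_eq_nil]
    exact fun l hl ↦ (Multiset.eq_of_mem_replicate hl).trans_lt one_lt_two |>.not_ge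
  have two_le : 2 ≤ orderOf (c ^ k) :=
    (Nat.two_le_iff _).2 ⟨(orderOf_pos _).ne', mt orderOf_eq_one_iff.1 hk⟩
  have eq_replicate := Multiset.eq_replicate_card.2 fun l ↦
    eq_orderOf_pow_of_mem_cycleType_pow hc (k := k)
  have support_eq : (c ^ k).support = c.support :=
    hc.support_pow_eq_iff.2 (mt orderOf_dvd_iff_pow_eq_one.1 hk)
  have card_eq : (c ^ k).cycleType.card = c.support.card.gcd k := by
    refine Nat.eq_of_mul_eq_mul_right (orderOf_pos (c ^ k)) ?_
    calc (c ^ k).cycleType.card * orderOf (c ^ k)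
        = (c ^ k).cycleType.sum := by
          conv_rhs => rw [eq_replicate, Multiset.sum_replicate, smul_eq_mul]
      _ = c.support.card := by rw [sum_cycleType, support_eq]
      _ = c.support.card.gcd k * orderOf (c ^ k) := by
          rw [order, Nat.mul_div_cancel' (Nat.gcd_dvd_left _ _)]
  rw [eq_replicate, card_eq, Multiset.filter_eq_self.2 fun l hl ↦
    (Multiset.eq_of_mem_replicate hl).symm ▸ two_le]

lemma cycleType_pow (σ : Perm α) (k : ℕ) :
    (σ ^ k).cycleType = (powParts k σ.cycleType).filter (2 ≤ ·) := by
  induction σ using cycle_induction_on with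
  | base_one => simp [powParts]
  | base_cycles σ hσ => rw [cycleType_pow_of_isCycle hσ, hσ.cycleType]
  | induction_disjoint σ τ hd _ hσ hτ =>
    rw [hd.commute.mul_pow, (hd.pow_disjoint_pow k k).cycleType_mul, hd.cycleType_mul,
      powParts_add, Multiset.filter_add, hσ, hτ]

lemma parts_partition_eq {M : Multiset ℕ} (hpos : 0 ∉ M) (hsum : M.sum = Fintype.card α)
    (hM : σ.cycleType = M.filter (2 ≤ ·)) : σ.partition.parts = M := by
  have ones : M.filter (¬ 2 ≤ ·) = Multiset.replicate (M.filter (¬ 2 ≤ ·)).card 1 := by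
    refine Multiset.eq_replicate_card.2 fun a ha ↦ ?_
    obtain ⟨ha, ha2⟩ := Multiset.mem_filter.1 ha
    have : a ≠ 0 := fun h ↦ hpos (h ▸ ha)
    omega
  have split := Multiset.filter_add_not (2 ≤ ·) M
  have card_ones : Fintype.card α - σ.support.card = (M.filter (¬ 2 ≤ ·)).card := by
    have := congrArg Multiset.sum split
    rw [Multiset.sum_add, ones, Multiset.sum_replicate, ← hM, sum_cycleType, hsum] at this
    simp only [smul_eq_mul, mul_one] at this
    omega
  rw [parts_partition, card_ones, ← ones, hM, split]

lemma zero_notMem_parts_partition (σ : Perm α) : 0 ∉ σ.partition.parts := fun h ↦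
  (σ.partition.parts_pos h).false

theorem parts_partition_pow (σ : Perm α) (k : ℕ) :
    (σ ^ k).partition.parts = powParts k σ.partition.parts := by
  refine parts_partition_eq (zero_notMem_powParts (zero_notMem_parts_partition σ))
    (by rw [sum_powParts, σ.partition.parts_sum]) ?_
  have powParts_ones (m : ℕ) : powParts k (Multiset.replicate m 1) = Multiset.replicate m 1 :=
    powParts_of_coprime fun a ha ↦ Multiset.eq_of_mem_replicate ha ▸ Nat.coprime_one_left k
  rw [cycleType_pow, parts_partition, powParts_add, powParts_ones, Multiset.filter_add]
  simp [Multiset.filter_eq_nil, Multiset.mem_replicate]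

lemma exists_parts_partition_eq {M : Multiset ℕ} (hpos : 0 ∉ M)
    (hsum : M.sum = Fintype.card α) : ∃ σ : Perm α, σ.partition.parts = M := by
  have filter_sum_le : (M.filter (2 ≤ ·)).sum ≤ Fintype.card α := by
    have split := congrArg Multiset.sum (Multiset.filter_add_not (2 ≤ ·) M)
    rw [Multiset.sum_add, hsum] at split
    exact Nat.le.intro split
  obtain ⟨σ, hσ⟩ := (exists_with_cycleType_iff α).2
    ⟨filter_sum_le, fun _ ↦ Multiset.of_mem_filter⟩
  exact ⟨σ, parts_partition_eq hpos hsum hσ⟩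

theorem exists_pow_eq_and_parts_partition_eq_iff {k : ℕ} (hk : k ≠ 0) {M : Multiset ℕ} :
    (∃ τ : Perm α, τ ^ k = σ ∧ τ.partition.parts = M) ↔ powParts k M = σ.partition.parts := by
  constructor
  · rintro ⟨τ, rfl, rfl⟩
    exact (parts_partition_pow τ k).symm
  · intro hM
    obtain ⟨τ, rfl⟩ := exists_parts_partition_eq (α := α) (M := M)
      (zero_notMem_of_powParts hk (hM ▸ zero_notMem_parts_partition σ))
      (by rw [← sum_powParts k M, hM, σ.partition.parts_sum])
    have conj : IsConj (τ ^ k) σ :=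
      partition_eq_of_isConj.2 (Nat.Partition.ext ((parts_partition_pow τ k).trans hM))
    obtain ⟨c, rfl⟩ := isConj_iff.1 conj
    exact ⟨c * τ * c⁻¹, conj_pow, by rw [← partition_eq_of_isConj.1 (isConj_iff.2 ⟨c, rfl⟩)]⟩

lemma filter_dvd_parts_partition {d : ℕ} (hd : d ≠ 1) (σ : Perm α) :
    σ.partition.parts.filter (d ∣ ·) = σ.cycleType.filter (d ∣ ·) := by
  simp [parts_partition, Multiset.filter_add, Multiset.filter_eq_nil, Multiset.mem_replicate, hd]

lemma count_parts_partition_of_ne_one {l : ℕ} (hl : l ≠ 1) (σ : Perm α) :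
    σ.partition.parts.count l = σ.cycleType.count l := by
  simp [parts_partition, Multiset.count_replicate, hl.symm]

lemma count_one_parts_partition (σ : Perm α) :
    σ.partition.parts.count 1 = Fintype.card α - σ.support.card := by
  have : 1 ∉ σ.cycleType := fun h ↦ (one_lt_of_mem_cycleType h).false
  simp [parts_partition, this]

lemma exists_odd_two_le_count_parts_partition_iff (σ : Perm α) :
    (∃ l, Odd l ∧ 2 ≤ σ.partition.parts.count l) ↔
      2 ≤ Fintype.card α - σ.support.card ∨ ∃ l, Odd l ∧ 2 ≤ σ.cycleType.count l := by
  constructor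
  · rintro ⟨l, hl, hcount⟩
    by_cases h1 : l = 1
    · rw [h1, count_one_parts_partition] at hcount
      exact .inl hcount
    · exact .inr ⟨l, hl, count_parts_partition_of_ne_one h1 σ ▸ hcount⟩
  · rintro (hfixed | ⟨l, hl, hcount⟩)
    · exact ⟨1, odd_one, hfixed.trans_eq (count_one_parts_partition σ).symm⟩
    · exact ⟨l, hl, hcount.trans (Multiset.count_le_of_le l (Multiset.le_add_right ..))⟩

lemma mem_alternatingGroup_iff_even_card_filter :
    σ ∈ alternatingGroup α ↔ Even (σ.partition.parts.filter (2 ∣ ·)).card := by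
  rw [mem_alternatingGroup, sign_of_cycleType, filter_dvd_parts_partition (by decide),
    ← even_sum_add_card_iff, neg_one_pow_eq_one_iff_even (by decide)]

end CycleType

theorem exists_mem_alternatingGroup_sq_eq_iff_parts {α : Type*} [Fintype α] [DecidableEq α]
    (g : Perm α) :
    (∃ h ∈ alternatingGroup α, h ^ 2 = g) ↔
      ∃ M, powParts 2 M = g.partition.parts ∧ Even (M.filter (2 ∣ ·)).card := by
  simp only [mem_alternatingGroup_iff_even_card_filter,
    ← exists_pow_eq_and_parts_partition_eq_iff two_ne_zero]
  grind

theorem square_criterion_in_alternating_group_general {α : Type*} [Fintype α] [DecidableEq α]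
    (g : Perm α) :
    (∃ h ∈ alternatingGroup α, h ^ 2 = g) ↔
      (∀ l : ℕ, Even l → Even (g.cycleType.count l)) ∧
        (Fintype.card α - g.support.card ≥ 2 ∨
          (∃ l : ℕ, Odd l ∧ 2 ≤ g.cycleType.count l) ∨
          4 ∣ (g.cycleType.filter fun l ↦ Even l).card) := by
  have even_counts : (∀ l, 2 ∣ l → 2 ∣ g.partition.parts.count l) ↔
      ∀ l, Even l → Even (g.cycleType.count l) := by
    simp only [even_iff_two_dvd]
    refine forall₂_congr fun l hl ↦ ?_
    rw [count_parts_partition_of_ne_one (by omega)]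
  rw [exists_mem_alternatingGroup_sq_eq_iff_parts, exists_powParts_two_eq_and_even_iff, even_counts,
    exists_odd_two_le_count_parts_partition_iff, filter_dvd_parts_partition (by decide), or_assoc]
  simp only [even_iff_two_dvd]

theorem square_criterion_in_alternating_group (n : ℕ) (g : alternatingGroup (Fin n)) :
    (∃ h : alternatingGroup (Fin n), h ^ 2 = g) ↔
      ((∀ l : ℕ, Even l →
          Even (Multiset.count l (Equiv.Perm.cycleType (g : Equiv.Perm (Fin n))))) ∧
        (n - (Equiv.Perm.support (g : Equiv.Perm (Fin n))).card ≥ 2 ∨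
          (∃ l : ℕ, Odd l ∧
            2 ≤ Multiset.count l (Equiv.Perm.cycleType (g : Equiv.Perm (Fin n)))) ∨
          4 ∣ Multiset.card
            (Multiset.filter (fun l => Even l)
              (Equiv.Perm.cycleType (g : Equiv.Perm (Fin n)))))) := by
  simpa [Subtype.ext_iff] using square_criterion_in_alternating_group_general (g : Perm (Fin n))
end

section
/- Let g : Equiv.Perm α be a permutation of a finite type such that for some even natural number l the multiplicity of l in Equiv.Perm.cycleType g is odd. Then g cannot be written as g = h^2 * t^2 with h and t disjoint permutations (Equiv.Perm.Disjoint h t); in particular (taking t = 1), g is not the square of any permutation of α. -/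
/-!
The `n`-th power of an `m`-cycle is a product of `gcd m n` cycles of length `m / gcd m n`. If every
prime factor of `n` divides this length, then `n / gcd m n`, being coprime to it, is `1`, so the
number of cycles is `n`. Summing over the cycles of `h`: if every prime factor of `n` divides `l`,
then the number of `l`-cycles of `h ^ n` is a multiple of `n`. A product `h ^ n * t ^ n` with `h`
and `t` commuting is itself an `n`-th power.
-/

theorem dvd_of_forall_prime_dvd_div_gcd {m n : ℕ} (hm : m ≠ 0)
    (h : ∀ p : ℕ, p.Prime → p ∣ n → p ∣ m / m.gcd n) : n ∣ m := by
  have hgcd : 0 < m.gcd n := Nat.gcd_pos_of_pos_left n (Nat.pos_of_ne_zero hm)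
  have hcop : (m / m.gcd n).Coprime (n / m.gcd n) := Nat.coprime_div_gcd_div_gcd hgcd
  have hdvd : n / m.gcd n ∣ n := Nat.div_dvd_of_dvd (Nat.gcd_dvd_right m n)
  have hquot : n / m.gcd n = 1 := by
    by_contra hne
    obtain ⟨p, hp, hpn⟩ := Nat.exists_prime_and_dvd hne
    exact Nat.not_coprime_of_dvd_of_dvd hp.one_lt (h p hp (hpn.trans hdvd)) hpn hcop
  rw [← Nat.eq_of_dvd_of_div_eq_one (Nat.gcd_dvd_right m n) hquot]
  exact Nat.gcd_dvd_left m n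

section CycleType

open Equiv Equiv.Perm

variable {α : Type*} [Fintype α] [DecidableEq α]

theorem eq_orderOf_of_mem_cycleType_pow {c : Perm α} (hc : c.IsCycle) {n k : ℕ}
    (hk : k ∈ (c ^ n).cycleType) : k = orderOf (c ^ n) := by
  refine Nat.dvd_antisymm (dvd_of_mem_cycleType hk) ?_
  obtain ⟨d, τ, hmul, hdisj, hd, rfl⟩ := mem_cycleType_iff.1 hk
  obtain ⟨x, hx⟩ := hd.nonempty_support
  have hdx : d x ≠ x := mem_support.1 hx
  have hτx : τ x = x := (hdisj x).resolve_left hdx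
  have hcx : c x ≠ x := by
    intro hfix
    have hpow : (c ^ n) x = x := pow_apply_eq_self_of_apply_eq_self hfix n
    rw [hmul, mul_apply, hτx] at hpow
    exact hdx hpow
  -- A power of a cycle that fixes a point moved by that cycle is the identity.
  rw [orderOf_dvd_iff_pow_eq_one, ← pow_mul, hc.pow_eq_one_iff' hcx, pow_mul, hmul,
    hdisj.commute.mul_pow, mul_apply, pow_apply_eq_self_of_apply_eq_self hτx, ← hd.orderOf,
    pow_orderOf_eq_one, one_apply]

theorem cycleType_pow_of_isCycle_s7 {c : Perm α} (hc : c.IsCycle) {n : ℕ} (hn : ¬ orderOf c ∣ n) :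
    (c ^ n).cycleType =
      Multiset.replicate ((orderOf c).gcd n) (orderOf c / (orderOf c).gcd n) := by
  set m := orderOf c with hm
  have hrep : (c ^ n).cycleType =
      Multiset.replicate (Multiset.card (c ^ n).cycleType) (m / m.gcd n) :=
    Multiset.eq_replicate_card.2 fun k hk =>
      (eq_orderOf_of_mem_cycleType_pow hc hk).trans (orderOf_pow c)
  have hcard : Multiset.card (c ^ n).cycleType * (m / m.gcd n) = m.gcd n * (m / m.gcd n) :=
    calc Multiset.card (c ^ n).cycleType * (m / m.gcd n)
      _ = (c ^ n).cycleType.sum := by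
        conv_rhs => rw [hrep, Multiset.sum_replicate, smul_eq_mul]
      _ = m := by rw [sum_cycleType, hc.support_pow_eq_iff.2 hn, hm, hc.orderOf]
      _ = m.gcd n * (m / m.gcd n) := (Nat.mul_div_cancel' (Nat.gcd_dvd_left m n)).symm
  have hpos : 0 < m / m.gcd n := Nat.div_gcd_pos_of_pos_left n (orderOf_pos c)
  rw [hrep, Nat.eq_of_mul_eq_mul_right hpos hcard]

theorem dvd_count_cycleType_pow_of_isCycle {c : Perm α} (hc : c.IsCycle) {n l : ℕ}
    (hl : ∀ p : ℕ, p.Prime → p ∣ n → p ∣ l) : n ∣ (c ^ n).cycleType.count l := by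
  by_cases hn : orderOf c ∣ n
  · simp [orderOf_dvd_iff_pow_eq_one.1 hn]
  · rw [cycleType_pow_of_isCycle_s7 hc hn, Multiset.count_replicate]
    split_ifs with hlen
    · subst hlen
      exact Nat.dvd_gcd (dvd_of_forall_prime_dvd_div_gcd (orderOf_pos c).ne' hl) dvd_rfl
    · exact dvd_zero n

theorem dvd_count_cycleType_pow (h : Perm α) {n l : ℕ}
    (hl : ∀ p : ℕ, p.Prime → p ∣ n → p ∣ l) : n ∣ (h ^ n).cycleType.count l := by
  induction h using cycle_induction_on with
  | base_one => simp
  | base_cycles c hc => exact dvd_count_cycleType_pow_of_isCycle hc hl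
  | induction_disjoint c τ hdisj _ hc hτ =>
    rw [hdisj.commute.mul_pow, (hdisj.pow_disjoint_pow n n).cycleType_mul, Multiset.count_add]
    exact dvd_add hc hτ

theorem not_prod_of_disjoint_squares_of_odd_even_multiplicity_general (g : Perm α) {n : ℕ}
    (hmult : ∃ l : ℕ, (∀ p : ℕ, p.Prime → p ∣ n → p ∣ l) ∧ ¬ n ∣ g.cycleType.count l) :
    (¬ ∃ h t : Perm α, Commute h t ∧ g = h ^ n * t ^ n) ∧ ¬ ∃ h : Perm α, h ^ n = g := by
  obtain ⟨l, hl, hcount⟩ := hmult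
  have not_pow : ¬ ∃ h : Perm α, h ^ n = g := by
    rintro ⟨h, rfl⟩
    exact hcount (dvd_count_cycleType_pow h hl)
  refine ⟨?_, not_pow⟩
  rintro ⟨h, t, hcomm, rfl⟩
  exact not_pow ⟨h * t, hcomm.mul_pow n⟩

end CycleType

theorem not_prod_of_disjoint_squares_of_odd_even_multiplicity {α : Type*}
    [Fintype α] [DecidableEq α] (g : Equiv.Perm α)
    (hmult : ∃ l : ℕ, Even l ∧ Odd (Multiset.count l (Equiv.Perm.cycleType g))) :
    (¬ ∃ h t : Equiv.Perm α, Equiv.Perm.Disjoint h t ∧ g = h ^ 2 * t ^ 2) ∧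
      ¬ ∃ h : Equiv.Perm α, h ^ 2 = g := by
  obtain ⟨l, hl, hodd⟩ := hmult
  exact (not_prod_of_disjoint_squares_of_odd_even_multiplicity_general g
    ⟨l, fun _ _ hp => hp.trans hl.two_dvd, hodd.not_two_dvd_nat⟩).imp_left
      fun hprod ⟨h, t, hdisj, hg⟩ => hprod ⟨h, t, hdisj.commute, hg⟩
end

section
/- Let l ≥ 2 and let π : Equiv.Perm (Fin (2*l)) be a product of two disjoint l-cycles covering all points, i.e. Equiv.Perm.cycleType π = {l, l}. Then the number of square roots of π in the full symmetric group on Fin (2*l) is: Fintype.card {h : Equiv.Perm (Fin (2*l)) // h^2 = π} = l + 1 if l is odd, and = l if l is even. Moreover, when l is odd each root is either a single (2*l)-cycle or a product of two l-cycles, and when l is even each root is a single (2*l)-cycle. -/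
/-!
Identify the permuted set with two copies of `ZMod l`, on each of which `π` is `x ↦ x + 1`. A
square root of `π` commutes with `π`, hence with all translations, so it permutes the two copies
and translates on each of them. If it preserves the copies, then it translates both of them by an
`a` with `2 * a = 1`; there is one such `a` for odd `l` and none for even `l`. If it exchanges them,
then its two translation amounts add up to `1`, which leaves `l` choices, and it is a single cycle
interleaving the two cycles of `π`.
-/

open Equiv Equiv.Perm

section CycleType

variable {α β : Type*} [Fintype α] [DecidableEq α] [Fintype β] [DecidableEq β]

theorem cycleType_permCongr (e : α ≃ β) (f : Perm α) :
    (e.permCongr f).cycleType = f.cycleType := by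
  let e' : α ≃ {_b : β // True} := e.trans (Equiv.subtypeUnivEquiv fun _ => trivial).symm
  have hext : e.permCongr f = f.extendDomain e' := by
    ext b
    rw [extendDomain_apply_subtype f e' trivial]
    rfl
  rw [hext, cycleType_extendDomain]

theorem exists_permCongr_eq_of_cycleType_eq {f : Perm α} {g : Perm β}
    (hcard : Fintype.card α = Fintype.card β) (hfg : f.cycleType = g.cycleType) :
    ∃ e : α ≃ β, e.permCongr f = g := by
  let e := Fintype.equivOfCardEq hcard
  have hconj : IsConj (e.permCongr f) g := by
    rw [isConj_iff_cycleType_eq, cycleType_permCongr, hfg]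
  obtain ⟨τ, hτ⟩ := isConj_iff.1 hconj
  refine ⟨e.trans τ, ?_⟩
  rw [← hτ, ← permCongr_eq_mul]
  rfl

theorem cycleType_eq_replicate_of_pow_apply_eq_self_iff {f : Perm α} {k n : ℕ} (hn : 1 < n)
    (hcard : Fintype.card α = k * n) (hf : ∀ x m, (f ^ m) x = x ↔ n ∣ m) :
    f.cycleType = Multiset.replicate k n := by
  have hmoved (x : α) : x ∈ f.support := by
    rw [mem_support, ← pow_one f, Ne, hf, Nat.dvd_one]
    exact hn.ne'
  have hcycle (x : α) : (f.cycleOf x).support.card = n := by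
    have hx : x ∈ (f.cycleOf x).support := mem_support_cycleOf_iff.2 ⟨.refl f x, hmoved x⟩
    refine Nat.dvd_right_iff_eq.1 fun m => ?_
    rw [← (isCycleOn_support_cycleOf f x).pow_apply_eq hx, hf]
  have hlengths : ∀ m ∈ f.cycleType, m = n := by
    intro m hm
    rw [cycleType_def, Multiset.mem_map] at hm
    obtain ⟨c, hc, rfl⟩ := hm
    obtain ⟨x, hx⟩ := (mem_cycleFactorsFinset_iff.1 hc).1.nonempty_support
    rw [cycle_is_cycleOf hx hc]
    exact hcycle x
  have hreplicate := Multiset.eq_replicate_card.2 hlengths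
  have hsum : f.cycleType.card * n = k * n := by
    have hsupport : f.support = Finset.univ := Finset.eq_univ_of_forall hmoved
    rw [← hcard, ← Finset.card_univ, ← hsupport, ← sum_cycleType, ← smul_eq_mul,
      ← Multiset.sum_replicate, ← hreplicate]
  rw [hreplicate, Nat.eq_of_mul_eq_mul_right (by omega) hsum]

end CycleType

section Wreath

variable {A ι : Type*} [AddCommGroup A]

/-- The permutation of `ι` copies of `A` that maps copy `i` to copy `σ i`, translating by `c i`.
These are the elements of the wreath product `A ≀ Perm ι` in its imprimitive action on `A × ι`. -/
def wreathPerm (σ : Perm ι) (c : ι → A) : Perm (A × ι) where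
  toFun p := (p.1 + c p.2, σ p.2)
  invFun p := (p.1 - c (σ.symm p.2), σ.symm p.2)
  left_inv p := by simp
  right_inv p := by simp

variable (ι) in
/-- The simultaneous translation by `a` of `ι` copies of `A`. For `A = ZMod l` and `a = 1` it is the
model of a product of `l`-cycles indexed by `ι`. -/
def translation (a : A) : Perm (A × ι) := wreathPerm 1 fun _ => a

@[simp]
theorem wreathPerm_apply (σ : Perm ι) (c : ι → A) (p : A × ι) :
    wreathPerm σ c p = (p.1 + c p.2, σ p.2) := rfl

@[simp]
theorem translation_apply (a : A) (p : A × ι) : translation ι a p = (p.1 + a, p.2) := rfl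

theorem wreathPerm_sq_eq_translation_iff {σ : Perm ι} {c : ι → A} {a : A} :
    wreathPerm σ c ^ 2 = translation ι a ↔ σ ^ 2 = 1 ∧ ∀ i, c i + c (σ i) = a := by
  simp only [Equiv.ext_iff, Prod.forall, sq, Perm.mul_apply, wreathPerm_apply, translation_apply,
    Prod.mk.injEq, add_assoc, add_right_inj, one_apply]
  exact ⟨fun h => ⟨fun i => (h 0 i).2, fun i => (h 0 i).1⟩, fun h _ i => ⟨h.2 i, h.1 i⟩⟩

theorem translation_injective [Nonempty ι] : Function.Injective (translation ι : A → _) := by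
  intro a b hab
  obtain ⟨i⟩ := ‹Nonempty ι›
  simpa using DFunLike.congr_fun hab (0, i)

theorem translation_pow (a : A) (n : ℕ) : translation ι a ^ n = translation ι (n • a) := by
  induction n with
  | zero => ext1 ⟨x, i⟩; simp
  | succ n ih => ext1 ⟨x, i⟩; simp [pow_succ, ih, succ_nsmul', add_assoc]

theorem apply_eq_of_commute_translation {h : Perm (A × ι)}
    (hcomm : ∀ a, Commute h (translation ι a)) (p : A × ι) :
    h p = ((h (0, p.2)).1 + p.1, (h (0, p.2)).2) := by
  simpa using DFunLike.congr_fun (hcomm p.1).eq (0, p.2)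

theorem exists_eq_wreathPerm {h : Perm (A × ι)} (hcomm : ∀ a, Commute h (translation ι a)) :
    ∃ σ c, h = wreathPerm σ c := by
  have copy_eq {g : Perm (A × ι)} (hg : ∀ a, Commute g (translation ι a)) (p : A × ι) :
      (g (0, p.2)).2 = (g p).2 :=
    (congrArg Prod.snd (apply_eq_of_commute_translation hg p)).symm
  have hcomm_symm (a : A) : Commute h.symm (translation ι a) := (hcomm a).inv_left
  let σ : Perm ι :=
    { toFun i := (h (0, i)).2
      invFun i := (h.symm (0, i)).2
      left_inv i := by simp only [copy_eq hcomm_symm, symm_apply_apply]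
      right_inv i := by simp only [copy_eq hcomm, apply_symm_apply] }
  refine ⟨σ, fun i => (h (0, i)).1, ?_⟩
  ext1 p
  rw [apply_eq_of_commute_translation hcomm, wreathPerm_apply, add_comm p.1]
  rfl

end Wreath

section ZMod

variable {l : ℕ}

theorem commute_translation_of_commute_translation_one {ι : Type*} [NeZero l]
    {h : Perm (ZMod l × ι)} (hcomm : Commute h (translation ι 1)) (a : ZMod l) :
    Commute h (translation ι a) := by
  have hpow : translation ι (1 : ZMod l) ^ a.val = translation ι a := by
    rw [translation_pow, nsmul_one, ZMod.natCast_zmod_val]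
  exact hpow ▸ hcomm.pow_right a.val

theorem cycleType_translation_of_isUnit {ι : Type*} [Fintype ι] [DecidableEq ι] [NeZero l]
    (hl : l ≠ 1) {a : ZMod l} (ha : IsUnit a) :
    (translation ι a).cycleType = Multiset.replicate (Fintype.card ι) l := by
  refine cycleType_eq_replicate_of_pow_apply_eq_self_iff ?_ ?_ ?_
  · have := NeZero.ne l
    omega
  · rw [Fintype.card_prod, ZMod.card, mul_comm]
  · rintro ⟨x, i⟩ m
    simp [translation_pow, ha.mul_left_eq_zero, ZMod.natCast_eq_zero_iff]

theorem odd_of_two_mul_eq_one {a : ZMod l} (ha : 2 * a = 1) : Odd l := by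
  rw [← Nat.coprime_two_left, ← ZMod.isUnit_iff_coprime]
  exact .of_mul_eq_one a (mod_cast ha)

theorem ncard_two_mul_eq_one : {a : ZMod l | 2 * a = 1}.ncard = if Odd l then 1 else 0 := by
  split_ifs with hl
  · obtain ⟨u, hu⟩ : IsUnit (2 : ZMod l) := by
      exact_mod_cast (ZMod.isUnit_iff_coprime 2 l).2 (Nat.coprime_two_left.2 hl)
    rw [Set.ncard_eq_one]
    refine ⟨↑u⁻¹, Set.ext fun a => ?_⟩
    rw [Set.mem_ofPred_eq, Set.mem_singleton_iff, ← hu, ← Units.eq_inv_mul_iff_mul_eq, mul_one]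
  · have hempty : {a : ZMod l | 2 * a = 1} = ∅ :=
      Set.eq_empty_of_forall_notMem fun a ha => hl (odd_of_two_mul_eq_one ha)
    rw [hempty, Set.ncard_empty]

/-- The permutation of two copies of `ZMod l` which exchanges the copies and whose square is
`x ↦ x + 1` on both; `c` is the translation amount from the copy `false` to the copy `true`. -/
def interleaving (c : ZMod l) : Perm (ZMod l × Bool) :=
  wreathPerm boolNot fun i => bif i then 1 - c else c

theorem interleaving_apply_snd (c : ZMod l) (p : ZMod l × Bool) :
    (interleaving c p).2 = !p.2 := rfl

theorem interleaving_injective : Function.Injective (interleaving (l := l)) := by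
  intro c d hcd
  simpa [interleaving] using congrArg Prod.fst (DFunLike.congr_fun hcd (0, false))

theorem interleaving_ne_translation (c a : ZMod l) : interleaving c ≠ translation Bool a := by
  intro h
  simpa [interleaving_apply_snd] using congrArg Prod.snd (DFunLike.congr_fun h (0, false))

theorem interleaving_sq (c : ZMod l) : interleaving c ^ 2 = translation Bool 1 := by
  rw [interleaving, wreathPerm_sq_eq_translation_iff]
  exact ⟨by decide, by simp⟩

theorem translation_sq_eq_translation_one_iff {ι : Type*} [Nonempty ι] {a : ZMod l} :
    translation ι a ^ 2 = translation ι 1 ↔ 2 * a = 1 := by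
  rw [translation_pow, translation_injective.eq_iff, nsmul_eq_mul, Nat.cast_ofNat]

theorem interleaving_pow_apply_eq_self_iff (c : ZMod l) (p : ZMod l × Bool) (m : ℕ) :
    (interleaving c ^ m) p = p ↔ 2 * l ∣ m := by
  rcases m.even_or_odd' with ⟨k, rfl | rfl⟩
  · rw [pow_mul, interleaving_sq, translation_pow, Nat.mul_dvd_mul_iff_left two_pos,
      ← ZMod.natCast_eq_zero_iff]
    simp [Prod.ext_iff]
  · have hcopy : ((interleaving c ^ (2 * k + 1)) p).2 = !p.2 := by
      rw [pow_succ', Perm.mul_apply, interleaving_apply_snd, pow_mul, interleaving_sq,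
        translation_pow]
      rfl
    refine iff_of_false (fun h => ?_) (fun h => ?_)
    · simp [h] at hcopy
    · have := dvd_of_mul_right_dvd h
      omega

theorem cycleType_interleaving [NeZero l] (c : ZMod l) :
    (interleaving c).cycleType = {2 * l} := by
  refine cycleType_eq_replicate_of_pow_apply_eq_self_iff (k := 1) ?_ ?_
    (interleaving_pow_apply_eq_self_iff c)
  · have := NeZero.ne l
    omega
  · rw [Fintype.card_prod, ZMod.card, Fintype.card_bool, one_mul, mul_comm]

theorem sq_eq_translation_one_iff [NeZero l] {h : Perm (ZMod l × Bool)} :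
    h ^ 2 = translation Bool 1 ↔
      (∃ c, interleaving c = h) ∨ ∃ a, 2 * a = 1 ∧ translation Bool a = h := by
  constructor
  · intro hsq
    have hcomm : Commute h (translation Bool 1) := hsq ▸ Commute.self_pow h 2
    obtain ⟨σ, c, rfl⟩ :=
      exists_eq_wreathPerm (commute_translation_of_commute_translation_one hcomm)
    have hsum := (wreathPerm_sq_eq_translation_iff.1 hsq).2
    have perm_bool : ∀ τ : Perm Bool, τ = boolNot ∨ τ = 1 := by decide
    rcases perm_bool σ with rfl | rfl
    · refine .inl ⟨c false, congrArg _ (funext fun i => ?_)⟩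
      cases i
      · rfl
      · exact sub_eq_of_eq_add' (hsum false).symm
    · have hhalf (i : Bool) : 2 * c i = 1 := (two_mul _).trans (hsum i)
      have hconst : c true = c false := by
        linear_combination c false * hhalf true - c true * hhalf false
      refine .inr ⟨c false, hhalf false, congrArg _ (funext fun i => ?_)⟩
      cases i
      · rfl
      · exact hconst.symm
  · rintro (⟨c, rfl⟩ | ⟨a, ha, rfl⟩)
    · exact interleaving_sq c
    · exact translation_sq_eq_translation_one_iff.2 ha

theorem ncard_sq_eq_translation_one [NeZero l] :
    {h : Perm (ZMod l × Bool) | h ^ 2 = translation Bool 1}.ncard =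
      if Odd l then l + 1 else l := by
  have hroots : {h : Perm (ZMod l × Bool) | h ^ 2 = translation Bool 1} =
      Set.range interleaving ∪ translation Bool '' {a | 2 * a = 1} :=
    Set.ext fun h => sq_eq_translation_one_iff
  have hdisjoint : Disjoint (Set.range (interleaving (l := l)))
      (translation Bool '' {a | 2 * a = 1}) := by
    rw [Set.disjoint_left]
    rintro _ ⟨c, rfl⟩ ⟨a, -, ha⟩
    exact interleaving_ne_translation c a ha.symm
  rw [hroots, Set.ncard_union_eq hdisjoint, Set.ncard_range_of_injective interleaving_injective,
    Set.ncard_image_of_injective _ translation_injective, Nat.card_zmod, ncard_two_mul_eq_one]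
  split_ifs <;> rfl

theorem cycleType_of_sq_eq_translation_one [NeZero l] (hl : l ≠ 1) {h : Perm (ZMod l × Bool)}
    (hsq : h ^ 2 = translation Bool 1) :
    h.cycleType = {2 * l} ∨ Odd l ∧ h.cycleType = {l, l} := by
  rcases sq_eq_translation_one_iff.1 hsq with ⟨c, rfl⟩ | ⟨a, ha, rfl⟩
  · exact .inl (cycleType_interleaving c)
  · exact .inr ⟨odd_of_two_mul_eq_one ha,
      cycleType_translation_of_isUnit hl (.of_mul_eq_one_right 2 ha)⟩

end ZMod

theorem card_sqrt_of_two_l_cycles_general {α : Type*} [Fintype α] [DecidableEq α] (l : ℕ)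
    (hα : Fintype.card α = 2 * l) (π : Perm α) (hπ : π.cycleType = {l, l}) :
    (Fintype.card {h : Perm α // h ^ 2 = π} = if Odd l then l + 1 else l) ∧
      (∀ h : Perm α, h ^ 2 = π →
        (Odd l → h.cycleType = {2 * l} ∨ h.cycleType = {l, l}) ∧
        (Even l → h.cycleType = {2 * l})) := by
  have hl : 2 ≤ l := two_le_of_mem_cycleType (σ := π) (by simp [hπ])
  have : NeZero l := ⟨by omega⟩
  obtain ⟨e, rfl⟩ : ∃ e : ZMod l × Bool ≃ α, e.permCongr (translation Bool 1) = π :=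
    exists_permCongr_eq_of_cycleType_eq (by simp [hα, mul_comm])
      ((cycleType_translation_of_isUnit (by omega) isUnit_one).trans hπ.symm)
  have hsq (g : Perm (ZMod l × Bool)) :
      g ^ 2 = translation Bool 1 ↔ e.permCongr g ^ 2 = e.permCongr (translation Bool 1) := by
    rw [← permCongrHom_coe, ← map_pow, e.permCongrHom.injective.eq_iff]
  constructor
  · rw [← ncard_sq_eq_translation_one, ← Nat.card_eq_fintype_card]
    exact (Nat.card_congr (e.permCongr.subtypeEquiv hsq)).symm
  · intro h hh
    obtain ⟨g, rfl⟩ := e.permCongr.surjective h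
    rw [cycleType_permCongr]
    rcases cycleType_of_sq_eq_translation_one (by omega) ((hsq g).2 hh) with hg | ⟨hodd, hg⟩
    · exact ⟨fun _ => .inl hg, fun _ => hg⟩
    · exact ⟨fun _ => .inr hg, fun heven => absurd heven (Nat.not_even_iff_odd.2 hodd)⟩

theorem card_sqrt_of_two_l_cycles (l : ℕ) (hl : 2 ≤ l)
    (π : Equiv.Perm (Fin (2 * l))) (hπ : Equiv.Perm.cycleType π = {l, l}) :
    (Fintype.card {h : Equiv.Perm (Fin (2 * l)) // h ^ 2 = π} =
        if Odd l then l + 1 else l) ∧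
      (∀ h : Equiv.Perm (Fin (2 * l)), h ^ 2 = π →
        (Odd l → Equiv.Perm.cycleType h = {2 * l} ∨ Equiv.Perm.cycleType h = {l, l}) ∧
        (Even l → Equiv.Perm.cycleType h = {2 * l})) :=
  card_sqrt_of_two_l_cycles_general l (Fintype.card_fin _) π hπ
end

section
/- For every n ≥ 4 the set of squares in the alternating group is not closed under multiplication: there exist elements g₁ and g₂ of alternatingGroup (Fin n) such that g₁ = h₁^2 and g₂ = h₂^2 for some h₁, h₂ in alternatingGroup (Fin n), but there is no h in alternatingGroup (Fin n) with h^2 = g₁ * g₂. -/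
/-!
The squares of two cycles of odd length multiply to a permutation whose cycle type rules out an
even square root.

On at least six points, two 5-cycles give the cycle type `{4, 2}`. Conjugation by `σ` is an
involution on the cycles of `σ ^ 2`. It fixes no cycle of even length: if `σ` commuted with such a
cycle, it would restrict to a square root of that cycle, which is odd. So `σ ^ 2` has an even number
of cycles of each even length, whereas the product has a single 2-cycle.

On four or five points, two 3-cycles give a double transposition. A square root of it has order 4,
so for lack of room it is a 4-cycle, which is odd.
-/

open Equiv Equiv.Perm

variable {α : Type*} [Fintype α] [DecidableEq α]

theorem not_commute_of_mem_cycleFactorsFinset_sq_of_even {σ c : Perm α}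
    (hc : c ∈ (σ ^ 2).cycleFactorsFinset) (heven : Even c.support.card) : ¬ Commute σ c := by
  intro hcomm
  obtain ⟨hcycle, hagree⟩ := mem_cycleFactorsFinset_iff.1 hc
  have hsupport : ∀ x, σ x ∈ c.support ↔ x ∈ c.support := mem_support_iff_of_commute hcomm
  have hroot : c = ofSubtype (σ.subtypePerm hsupport) ^ 2 := by
    rw [← map_pow, subtypePerm_pow]
    ext x
    by_cases hx : x ∈ c.support
    · rw [ofSubtype_apply_of_mem _ hx, subtypePerm_apply, hagree x hx]
    · rw [ofSubtype_apply_of_not_mem _ hx, notMem_support.1 hx]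
  have hsign : sign c = 1 := by rw [hroot, map_pow, Int.units_sq]
  rw [hcycle.sign, heven.neg_one_pow] at hsign
  exact absurd hsign (by decide)

theorem even_count_cycleType_sq (σ : Perm α) {k : ℕ} (hk : Even k) :
    Even ((σ ^ 2).cycleType.count k) := by
  have hcount : (σ ^ 2).cycleType.count k =
      ((σ ^ 2).cycleFactorsFinset.filter fun c => k = c.support.card).card := by
    rw [cycleType_def, Multiset.count_map]
    rfl
  rw [hcount, ← ZMod.natCast_eq_zero_iff_even, Finset.cast_card]
  refine Finset.sum_involution (fun c _ => σ * c * σ⁻¹) (fun _ _ => by decide) ?_ ?_ ?_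
  · intro c hc _ hfix
    obtain ⟨hmem, rfl⟩ := Finset.mem_filter.1 hc
    exact not_commute_of_mem_cycleFactorsFinset_sq_of_even hmem hk (mul_inv_eq_iff_eq_mul.1 hfix)
  · intro c hc
    obtain ⟨hmem, rfl⟩ := Finset.mem_filter.1 hc
    refine Finset.mem_filter.2 ⟨?_, card_support_conj.symm⟩
    have hconj : σ * σ ^ 2 * σ⁻¹ = σ ^ 2 := by group
    rw [← hconj]
    exact (mem_cycleFactorsFinset_conj _ _ _).2 hmem
  · intro c hc
    have hcomm : Commute (σ ^ 2) c :=
      (self_mem_cycle_factors_commute (Finset.mem_filter.1 hc).1).symm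
    calc σ * (σ * c * σ⁻¹) * σ⁻¹ = σ ^ 2 * c * (σ ^ 2)⁻¹ := by
          simp only [sq, mul_inv_rev, mul_assoc]
      _ = c := mul_inv_eq_iff_eq_mul.2 hcomm.eq

theorem orderOf_mem_cycleType_of_eq_prime_pow {σ : Perm α} {p k : ℕ} (hp : p.Prime)
    (hσ : orderOf σ = p ^ (k + 1)) : orderOf σ ∈ σ.cycleType := by
  by_contra hmem
  have hdvd : orderOf σ ∣ p ^ k := by
    rw [← lcm_cycleType, Multiset.lcm_dvd]
    intro m hm
    obtain ⟨i, hi, rfl⟩ := (Nat.dvd_prime_pow hp).1 (hσ ▸ dvd_of_mem_cycleType hm)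
    have hne : i ≠ k + 1 := fun h => hmem (by rwa [hσ, ← h])
    exact pow_dvd_pow p (by lia)
  rw [hσ, Nat.pow_dvd_pow_iff_le_right hp.one_lt] at hdvd
  lia

theorem isCycle_of_orderOf_eq_prime_pow {σ : Perm α} {p k : ℕ} (hp : p.Prime)
    (hσ : orderOf σ = p ^ (k + 1)) (hcard : σ.support.card < p ^ (k + 1) + p) : σ.IsCycle := by
  obtain ⟨s, hs⟩ := Multiset.exists_cons_of_mem (orderOf_mem_cycleType_of_eq_prime_pow hp hσ)
  have hsum : s.sum < p := by
    rw [← sum_cycleType, hs, Multiset.sum_cons, hσ] at hcard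
    lia
  have hzero : s = 0 := by
    refine Multiset.eq_zero_of_forall_notMem fun m hm => ?_
    have hmem : m ∈ σ.cycleType := hs ▸ Multiset.mem_cons_of_mem hm
    have hpm : p ∣ m := by
      obtain ⟨i, -, rfl⟩ := (Nat.dvd_prime_pow hp).1 (hσ ▸ dvd_of_mem_cycleType hmem)
      exact dvd_pow_self p fun h => by simpa [h] using two_le_of_mem_cycleType hmem
    have hle : p ≤ m := Nat.le_of_dvd (by have := two_le_of_mem_cycleType hmem; lia) hpm
    exact (hle.trans (Multiset.le_sum_of_mem hm)).not_gt hsum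
  rw [← card_cycleType_eq_one, hs, hzero, Multiset.card_cons, Multiset.card_zero]

theorem sign_eq_neg_one_of_orderOf_eq_two_pow {σ : Perm α} {k : ℕ}
    (hσ : orderOf σ = 2 ^ (k + 1)) (hcard : σ.support.card < 2 ^ (k + 1) + 2) : sign σ = -1 := by
  have hcycle := isCycle_of_orderOf_eq_prime_pow Nat.prime_two hσ hcard
  rw [hcycle.sign, ← hcycle.orderOf, hσ, Even.neg_one_pow (even_two.pow_of_ne_zero k.succ_ne_zero)]

theorem cycleType_sq_ne_two_two {σ : Perm α} (hσ : sign σ = 1) (hcard : σ.support.card < 6) :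
    (σ ^ 2).cycleType ≠ {2, 2} := by
  intro htype
  have hsq : orderOf (σ ^ 2) = 2 := by
    rw [← lcm_cycleType, htype]
    decide
  obtain ⟨hpow, hne⟩ := orderOf_eq_prime_iff.1 hsq
  have horder : orderOf σ = 2 ^ 2 :=
    orderOf_eq_prime_pow (by rwa [pow_one]) (by rwa [pow_succ, pow_one, pow_mul])
  rw [sign_eq_neg_one_of_orderOf_eq_two_pow horder hcard] at hσ
  exact absurd hσ (by decide)

theorem cycleType_sq_ne_four_two (σ : Perm α) : (σ ^ 2).cycleType ≠ {4, 2} := by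
  intro htype
  have hcount := even_count_cycleType_sq σ even_two
  rw [htype] at hcount
  exact absurd hcount (by decide)

theorem exists_isSquare_not_isSquare_mul_of_embedding {β : Type*} [Fintype β] [DecidableEq β]
    (f : β ↪ α) {a b : Perm β} (ha : sign a = 1) (hb : sign b = 1) {m : Multiset ℕ}
    (hab : (a ^ 2 * b ^ 2).cycleType = m)
    (hm : ∀ c : Perm α, sign c = 1 → (c ^ 2).cycleType ≠ m) :
    ∃ g₁ g₂ : alternatingGroup α, IsSquare g₁ ∧ IsSquare g₂ ∧ ¬ IsSquare (g₁ * g₂) := by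
  let extend := extendDomainHom f.toEquivRange
  have hcycleType (g : Perm β) : (extend g).cycleType = g.cycleType := cycleType_extendDomain _
  have heven {g : Perm β} (hg : sign g = 1) : extend g ∈ alternatingGroup α :=
    mem_alternatingGroup.2 ((sign_extendDomain g _).trans hg)
  refine ⟨⟨extend a, heven ha⟩ ^ 2, ⟨extend b, heven hb⟩ ^ 2, .sq _, .sq _, fun hsq => ?_⟩
  obtain ⟨c, hc⟩ := (isSquare_iff_exists_sq _).1 hsq
  have hext : (c : Perm α) ^ 2 = extend (a ^ 2 * b ^ 2) := by
    rw [map_mul, map_pow, map_pow]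
    exact (congrArg Subtype.val hc).symm
  exact hm c (mem_alternatingGroup.1 c.2) (by rw [hext, hcycleType, hab])

theorem squares_not_closed_in_alternating_group_general (hα : 4 ≤ Fintype.card α) :
    ∃ g₁ g₂ : alternatingGroup α, IsSquare g₁ ∧ IsSquare g₂ ∧ ¬ IsSquare (g₁ * g₂) := by
  rcases lt_or_ge (Fintype.card α) 6 with hlt | hge
  · obtain ⟨f⟩ : Nonempty (Fin 4 ↪ α) := Function.Embedding.nonempty_of_card_le (by simpa)
    exact exists_isSquare_not_isSquare_mul_of_embedding f (a := c[0, 2, 1]) (b := c[1, 3, 2])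
      (by decide) (by decide) (m := {2, 2}) (by decide)
      fun c hc => cycleType_sq_ne_two_two hc (c.support.card_le_univ.trans_lt hlt)
  · obtain ⟨f⟩ : Nonempty (Fin 6 ↪ α) := Function.Embedding.nonempty_of_card_le (by simpa)
    exact exists_isSquare_not_isSquare_mul_of_embedding f (a := c[1, 5, 2, 4, 3])
      (b := c[0, 5, 4, 1, 3]) (by decide) (by decide) (m := {4, 2}) (by decide)
      fun c _ => cycleType_sq_ne_four_two c

theorem squares_not_closed_in_alternating_group (n : ℕ) (hn : 4 ≤ n) :
    ∃ g₁ g₂ : alternatingGroup (Fin n),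
      (∃ h₁ : alternatingGroup (Fin n), g₁ = h₁ ^ 2) ∧
      (∃ h₂ : alternatingGroup (Fin n), g₂ = h₂ ^ 2) ∧
      ¬ ∃ h : alternatingGroup (Fin n), h ^ 2 = g₁ * g₂ := by
  simpa only [isSquare_iff_exists_sq, eq_comm] using
    squares_not_closed_in_alternating_group_general (α := Fin n) (by simpa)
end

section
/- Criterion for square roots in SL(2, F_p): let p be an odd prime and let A be an element of Matrix.SpecialLinearGroup (Fin 2) (ZMod p) whose underlying matrix is semisimple, i.e. the minimal polynomial minpoly (ZMod p) (A : Matrix (Fin 2) (Fin 2) (ZMod p)) is squarefree. Then there exists B in Matrix.SpecialLinearGroup (Fin 2) (ZMod p) with B^2 = A if and only if IsSquare (Matrix.trace (A : Matrix (Fin 2) (Fin 2) (ZMod p)) + 2) holds in ZMod p. -/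
/-!
By Cayley–Hamilton, `(M + s) ^ 2 = (tr M + 2 * s) • M` for a `2 × 2` matrix `M` with
`det M = s ^ 2`. Hence `M + s`, divided by a square root of `tr M + 2 * s`, is a square root of `M`
whenever that scalar is invertible. Conversely `tr (B ^ 2) + 2 = (tr B) ^ 2` for `B` in `SL₂`.
The scalar `tr A + 2` vanishes only if `A + 1` is nilpotent; for semisimple `A` this forces
`A = -1`, which is the square of the rotation by a quarter turn.
-/

section FinTwo

open Matrix

variable {R : Type*} [CommRing R] (M : Matrix (Fin 2) (Fin 2) R)

theorem sq_fin_two : M ^ 2 = M.trace • M - M.det • 1 := by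
  nontriviality R
  have h : M ^ 2 - M.trace • M + M.det • 1 = 0 := by
    simpa [charpoly_fin_two, Algebra.smul_def] using M.aeval_self_charpoly
  rw [← sub_eq_zero, ← h]
  abel

theorem trace_sq_fin_two : (M ^ 2).trace = M.trace ^ 2 - 2 * M.det := by
  rw [sq_fin_two, trace_sub, trace_smul, trace_smul, trace_one]
  simp only [smul_eq_mul, Fintype.card_fin, Nat.cast_ofNat]
  ring

theorem det_add_smul_one_fin_two (s : R) : (M + s • 1).det = M.det + s * M.trace + s ^ 2 := by
  simp only [det_fin_two, trace_fin_two, Matrix.add_apply, Matrix.smul_apply, one_apply,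
    smul_eq_mul, if_true, zero_ne_one, one_ne_zero, if_false]
  ring

variable {M} {s : R}

theorem add_smul_one_sq_fin_two (hs : M.det = s ^ 2) :
    (M + s • 1) ^ 2 = (M.trace + 2 * s) • M := by
  have expand : (M + s • 1) ^ 2 = M ^ 2 + (2 * s) • M + s ^ 2 • 1 := by
    simp only [sq, add_mul, mul_add, smul_mul_assoc, mul_smul_comm, one_mul, mul_one]
    module
  rw [expand, sq_fin_two, hs]
  module

variable {u : Rˣ}

theorem inv_smul_add_smul_one_sq_fin_two (hs : M.det = s ^ 2) (hu : M.trace + 2 * s = u ^ 2) :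
    (u⁻¹ • (M + s • 1)) ^ 2 = M := by
  rw [smul_pow, add_smul_one_sq_fin_two hs, hu, ← Units.val_pow_eq_pow_val,
    ← Units.smul_def, inv_pow, inv_smul_smul]

theorem det_inv_smul_add_smul_one_fin_two (hs : M.det = s ^ 2) (hu : M.trace + 2 * s = u ^ 2) :
    (u⁻¹ • (M + s • 1)).det = s := by
  have hdet : (M + s • 1).det = (u : R) ^ 2 * s := by
    rw [det_add_smul_one_fin_two, hs, ← hu]
    ring
  rw [Units.smul_def, det_smul, hdet, Fintype.card_fin, ← mul_assoc, ← mul_pow,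
    Units.inv_mul, one_pow, one_mul]

end FinTwo

section Semisimple

open Polynomial

theorem aeval_eq_zero_of_isNilpotent_of_squarefree_minpoly {K S : Type*} [Field K] [Ring S]
    [Algebra K S] {x : S} {q : K[X]} (hx : Squarefree (minpoly K x))
    (hq : IsNilpotent (aeval x q)) : aeval x q = 0 := by
  obtain ⟨n, hn⟩ := hq
  rw [← map_pow] at hn
  exact minpoly.dvd_iff.mp (hx.isRadical n q (minpoly.dvd K x hn))

end Semisimple

namespace SL2

open Matrix Polynomial
open scoped MatrixGroups

theorem trace_sq_add_two {R : Type*} [CommRing R] (B : SL(2, R)) :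
    (B ^ 2).val.trace + 2 = B.val.trace ^ 2 := by
  rw [Matrix.SpecialLinearGroup.coe_pow, trace_sq_fin_two, B.det_coe]
  ring

theorem exists_sq_eq_of_trace_add_two_eq_unit_sq {R : Type*} [CommRing R] {A : SL(2, R)} {u : Rˣ}
    (hu : A.val.trace + 2 = u ^ 2) : ∃ B : SL(2, R), B ^ 2 = A := by
  have hs : A.val.det = 1 ^ 2 := by rw [A.det_coe, one_pow]
  have hu' : A.val.trace + 2 * 1 = u ^ 2 := by rw [mul_one, hu]
  exact ⟨⟨u⁻¹ • (A.val + (1 : R) • 1), det_inv_smul_add_smul_one_fin_two hs hu'⟩,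
    Subtype.ext (inv_smul_add_smul_one_sq_fin_two hs hu')⟩

theorem exists_sq_eq_neg_one (R : Type*) [CommRing R] : ∃ B : SL(2, R), B ^ 2 = -1 := by
  have hS : ModularGroup.S ^ 2 = -1 := by
    rw [sq]
    exact Subtype.ext ModularGroup.S_mul_S_eq
  refine ⟨Matrix.SpecialLinearGroup.map (Int.castRingHom R) ModularGroup.S, ?_⟩
  rw [← map_pow, hS]
  ext i j
  simp

variable {K : Type*} [Field K]

theorem eq_neg_one_of_squarefree_minpoly_of_trace_eq_neg_two {A : SL(2, K)}
    (hA : Squarefree (minpoly K A.val)) (htr : A.val.trace = -2) : A = -1 := by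
  have hsq : (A.val + (1 : K) • 1) ^ 2 = 0 := by
    rw [add_smul_one_sq_fin_two (by rw [A.det_coe, one_pow]), htr, mul_one,
      neg_add_cancel, zero_smul]
  have hnil : IsNilpotent (aeval A.val (X + 1 : K[X])) := ⟨2, by simpa using hsq⟩
  have hzero : A.val + 1 = 0 := by
    simpa using aeval_eq_zero_of_isNilpotent_of_squarefree_minpoly hA hnil
  exact Subtype.ext (eq_neg_of_add_eq_zero_left hzero)

theorem exists_sq_eq_iff (A : SL(2, K)) :
    (∃ B : SL(2, K), B ^ 2 = A) ↔
      IsSquare (A.val.trace + 2) ∧ (A.val.trace = -2 → A = -1) := by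
  constructor
  · rintro ⟨B, rfl⟩
    refine ⟨⟨B.val.trace, by rw [trace_sq_add_two, sq]⟩, fun htr ↦ ?_⟩
    have hB : B.val.trace = 0 := by
      rw [← sq_eq_zero_iff, ← trace_sq_add_two, htr, neg_add_cancel]
    have hsq : (B ^ 2).val = -1 := by
      rw [Matrix.SpecialLinearGroup.coe_pow, sq_fin_two, hB, B.det_coe,
        zero_smul, one_smul, zero_sub]
    exact Subtype.ext hsq
  · rintro ⟨⟨t, ht⟩, hA⟩
    rcases eq_or_ne t 0 with rfl | ht0
    · rw [hA (eq_neg_of_add_eq_zero_left (by rw [ht, mul_zero]))]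
      exact exists_sq_eq_neg_one K
    · exact exists_sq_eq_of_trace_add_two_eq_unit_sq (u := Units.mk0 t ht0)
        (by rw [ht, Units.val_mk0, sq])

end SL2

theorem sqrt_criterion_SL2_general {K : Type*} [Field K]
    {A : Matrix.SpecialLinearGroup (Fin 2) K} (hA : Squarefree (minpoly K A.val)) :
    (∃ B : Matrix.SpecialLinearGroup (Fin 2) K, B ^ 2 = A) ↔ IsSquare (A.val.trace + 2) :=
  (SL2.exists_sq_eq_iff A).trans
    (and_iff_left (SL2.eq_neg_one_of_squarefree_minpoly_of_trace_eq_neg_two hA))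

theorem sqrt_criterion_SL2 (p : ℕ) [Fact p.Prime] (hp : p ≠ 2)
    (A : Matrix.SpecialLinearGroup (Fin 2) (ZMod p))
    (hA : Squarefree (minpoly (ZMod p) (A : Matrix (Fin 2) (Fin 2) (ZMod p)))) :
    (∃ B : Matrix.SpecialLinearGroup (Fin 2) (ZMod p), B ^ 2 = A) ↔
      IsSquare (Matrix.trace (A : Matrix (Fin 2) (Fin 2) (ZMod p)) + 2) :=
  sqrt_criterion_SL2_general hA
end

section
/- Criterion for square roots in GL(2, F_p): let p be an odd prime and let A be an invertible 2×2 matrix over ZMod p (an element of the units of the matrix ring, equivalently of Matrix.GeneralLinearGroup (Fin 2) (ZMod p)) whose underlying matrix is semisimple, i.e. minpoly (ZMod p) A is squarefree. Then there exists an invertible 2×2 matrix B over ZMod p with B^2 = A if and only if there exists δ : ZMod p with δ^2 = Matrix.det A and IsSquare (Matrix.trace A + 2 * δ). -/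
/-!
By Cayley–Hamilton, a `2 × 2` matrix `B` with `B ^ 2 = A` satisfies
`trace A = trace B ^ 2 - 2 * det B`, so `δ = det B` meets the criterion. Conversely, if
`δ ^ 2 = det A` and `trace A + 2 * δ = τ ^ 2`, then Cayley–Hamilton for `A` reads
`(A + δ • 1) ^ 2 = τ ^ 2 • A`. For `τ ≠ 0` this makes `τ⁻¹ • (A + δ • 1)` a square root of `A`;
for `τ = 0` semisimplicity forces `A = -δ • 1`, and a scalar matrix always has a square root.
-/

open Matrix
open Polynomial hiding smul_pow

theorem exists_units_pow_eq_iff {M : Type*} [Monoid M] {n : ℕ} (hn : n ≠ 0) (u : Mˣ) :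
    (∃ v : Mˣ, v ^ n = u) ↔ ∃ x : M, x ^ n = u := by
  constructor
  · rintro ⟨v, rfl⟩
    exact ⟨v, (Units.val_pow_eq_pow_val v n).symm⟩
  · rintro ⟨x, hx⟩
    obtain ⟨v, rfl⟩ : IsUnit x := (isUnit_pow_iff hn).1 (hx ▸ u.isUnit)
    exact ⟨v, Units.ext (by rw [Units.val_pow_eq_pow_val, hx])⟩

theorem exists_pow_eq_of_pow_eq_pow_smul {K M : Type*} [GroupWithZero K] [Monoid M] [MulAction K M]
    [IsScalarTower K M M] [SMulCommClass K M M] {x y : M} {τ : K} {n : ℕ} (hτ : τ ≠ 0)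
    (h : y ^ n = τ ^ n • x) : ∃ z : M, z ^ n = x :=
  ⟨τ⁻¹ • y, by rw [smul_pow, h, inv_pow, inv_smul_smul₀ (pow_ne_zero n hτ)]⟩

theorem aeval_eq_zero_of_squarefree_minpoly {K R : Type*} [Field K] [Ring R] [Algebra K R] {x : R}
    (hx : Squarefree (minpoly K x)) {q : K[X]} {n : ℕ} (hq : aeval x q ^ n = 0) :
    aeval x q = 0 := by
  rw [← map_pow, ← minpoly.dvd_iff] at hq
  exact minpoly.dvd_iff.1 (hx.isRadical n q hq)

theorem eq_neg_smul_one_of_add_smul_one_pow_eq_zero {K R : Type*} [Field K] [Ring R] [Algebra K R]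
    {x : R} (hx : Squarefree (minpoly K x)) {δ : K} {n : ℕ} (h : (x + δ • 1) ^ n = 0) :
    x = -δ • 1 := by
  have aeval_eq : aeval x (X + C δ) = x + δ • 1 := by
    rw [map_add, aeval_X, aeval_C, Algebra.algebraMap_eq_smul_one]
  rw [neg_smul, ← add_eq_zero_iff_eq_neg]
  rw [← aeval_eq] at h ⊢
  exact aeval_eq_zero_of_squarefree_minpoly hx h

theorem exists_sq_eq_smul_one_fin_two {R : Type*} [Semiring R] (c : R) :
    ∃ B : Matrix (Fin 2) (Fin 2) R, B ^ 2 = c • 1 :=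
  ⟨!![0, c; 1, 0], by simp [sq, one_fin_two]⟩

section CommRing

variable {R : Type*} [CommRing R]

theorem sq_eq_trace_smul_sub_det_smul_one_fin_two (A : Matrix (Fin 2) (Fin 2) R) :
    A ^ 2 = A.trace • A - A.det • 1 := by
  nontriviality R
  have cayley_hamilton := aeval_self_charpoly A
  rw [charpoly_fin_two] at cayley_hamilton
  simp only [map_add, map_sub, map_mul, map_pow, aeval_X, aeval_C, Algebra.algebraMap_eq_smul_one,
    smul_one_mul] at cayley_hamilton
  rw [← sub_eq_zero, ← cayley_hamilton]
  abel

theorem trace_sq_fin_two_s13 (A : Matrix (Fin 2) (Fin 2) R) :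
    (A ^ 2).trace = A.trace ^ 2 - 2 * A.det := by
  rw [sq_eq_trace_smul_sub_det_smul_one_fin_two, trace_sub, trace_smul, trace_smul, trace_one,
    Fintype.card_fin, smul_eq_mul, smul_eq_mul, Nat.cast_ofNat, sq, mul_comm 2]

theorem add_smul_one_sq_eq_smul_fin_two (A : Matrix (Fin 2) (Fin 2) R) {δ : R}
    (hδ : δ ^ 2 = A.det) :
    (A + δ • 1) ^ 2 = (A.trace + 2 * δ) • A :=
  calc (A + δ • 1) ^ 2 = A ^ 2 + (2 * δ) • A + δ ^ 2 • 1 := by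
        rw [((Commute.one_right A).smul_right δ).add_sq, smul_pow, one_pow, mul_smul_comm, mul_one,
          mul_comm 2 δ, mul_smul, two_smul, two_mul A]
    _ = (A.trace + 2 * δ) • A := by
        rw [sq_eq_trace_smul_sub_det_smul_one_fin_two, hδ, add_smul]
        abel

end CommRing

theorem sqrt_criterion_GL2_general {K : Type*} [Field K] (A : Matrix (Fin 2) (Fin 2) K)
    (hA : Squarefree (minpoly K A)) :
    (∃ B : Matrix (Fin 2) (Fin 2) K, B ^ 2 = A) ↔
      ∃ δ : K, δ ^ 2 = A.det ∧ IsSquare (A.trace + 2 * δ) := by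
  constructor
  · rintro ⟨B, rfl⟩
    have trace_add_two_mul_det : (B ^ 2).trace + 2 * B.det = B.trace ^ 2 := by
      rw [trace_sq_fin_two_s13, sub_add_cancel]
    exact ⟨B.det, (det_pow B 2).symm, trace_add_two_mul_det ▸ IsSquare.sq B.trace⟩
  · rintro ⟨δ, hδ, hsq⟩
    obtain ⟨τ, hτ⟩ := hsq.exists_sq
    have sq_eq_smul : (A + δ • 1) ^ 2 = τ ^ 2 • A := hτ ▸ add_smul_one_sq_eq_smul_fin_two A hδ
    rcases eq_or_ne τ 0 with rfl | hτ₀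
    · rw [zero_pow two_ne_zero, zero_smul] at sq_eq_smul
      have eq_scalar : A = -δ • 1 := eq_neg_smul_one_of_add_smul_one_pow_eq_zero hA sq_eq_smul
      exact eq_scalar ▸ exists_sq_eq_smul_one_fin_two (-δ)
    · exact exists_pow_eq_of_pow_eq_pow_smul hτ₀ sq_eq_smul

theorem sqrt_criterion_GL2 (p : ℕ) [Fact p.Prime] (hp : p ≠ 2)
    (A : Matrix.GeneralLinearGroup (Fin 2) (ZMod p))
    (hA : Squarefree (minpoly (ZMod p) (A : Matrix (Fin 2) (Fin 2) (ZMod p)))) :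
    (∃ B : Matrix.GeneralLinearGroup (Fin 2) (ZMod p), B ^ 2 = A) ↔
      ∃ δ : ZMod p, δ ^ 2 = Matrix.det (A : Matrix (Fin 2) (Fin 2) (ZMod p)) ∧
        IsSquare (Matrix.trace (A : Matrix (Fin 2) (Fin 2) (ZMod p)) + 2 * δ) :=
  (exists_units_pow_eq_iff two_ne_zero A).trans (sqrt_criterion_GL2_general _ hA)
end

section
/- Square roots of a nontrivial Jordan block: let p be an odd prime and λ : ZMod p with λ ≠ 0, and let J be the 2×2 matrix over ZMod p with rows (λ, 1) and (0, λ) (a nontrivial Jordan block). Then there exists a 2×2 matrix B over ZMod p with B^2 = J if and only if IsSquare λ holds in ZMod p. -/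
/-!
A square root `B` of the Jordan block `J` commutes with `J = B ^ 2`, and the centralizer of `J`
consists of the matrices `!![a, b; 0, a]`. Such a matrix has square
`!![a ^ 2, 2 * a * b; 0, a ^ 2]`, so it is a square root of `J` exactly when `a ^ 2` is the
eigenvalue and `b` is inverse to `2 * a`.
-/

section JordanBlock

variable {R : Type*} [CommRing R]

theorem commute_jordanBlock_iff {lam : R} {B : Matrix (Fin 2) (Fin 2) R} :
    Commute B !![lam, 1; 0, lam] ↔ ∃ a b, B = !![a, b; 0, a] := by
  constructor
  · intro hB
    have lower_eq_zero : B 1 0 = 0 := by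
      have h := congrFun₂ hB.eq 0 0
      simp only [Matrix.mul_apply, Fin.sum_univ_two, Matrix.of_apply, Matrix.cons_val] at h
      linear_combination -h
    have diag_eq : B 1 1 = B 0 0 := by
      have h := congrFun₂ hB.eq 0 1
      simp only [Matrix.mul_apply, Fin.sum_univ_two, Matrix.of_apply, Matrix.cons_val] at h
      linear_combination -h
    refine ⟨B 0 0, B 0 1, ?_⟩
    conv_lhs => rw [Matrix.eta_fin_two B, lower_eq_zero, diag_eq]
  · rintro ⟨a, b, rfl⟩
    simp [Commute, SemiconjBy, mul_comm, add_comm]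

theorem sq_fin_two_toeplitz (a b : R) :
    !![a, b; 0, a] ^ 2 = !![a ^ 2, 2 * a * b; 0, a ^ 2] := by
  have corner : a * b + b * a = 2 * a * b := by ring
  simp [pow_two, corner]

theorem sq_eq_jordanBlock_iff {lam : R} {B : Matrix (Fin 2) (Fin 2) R} :
    B ^ 2 = !![lam, 1; 0, lam] ↔
      ∃ a b, B = !![a, b; 0, a] ∧ a ^ 2 = lam ∧ 2 * a * b = 1 := by
  constructor
  · intro hB
    obtain ⟨a, b, rfl⟩ : ∃ a b, B = !![a, b; 0, a] :=
      commute_jordanBlock_iff.mp (hB ▸ Commute.self_pow B 2)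
    rw [sq_fin_two_toeplitz] at hB
    exact ⟨a, b, rfl, congrFun₂ hB 0 0, congrFun₂ hB 0 1⟩
  · rintro ⟨a, b, rfl, rfl, hab⟩
    rw [sq_fin_two_toeplitz, hab]

theorem sqrt_of_jordan_block_general (lam : R) :
    (∃ B : Matrix (Fin 2) (Fin 2) R, B ^ 2 = !![lam, 1; 0, lam]) ↔
      IsUnit (2 * lam) ∧ IsSquare lam := by
  simp only [sq_eq_jordanBlock_iff]
  constructor
  · rintro ⟨-, a, b, -, rfl, hab⟩
    have h2a : IsUnit (2 * a) := .of_mul_eq_one b hab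
    have ha : IsUnit a := isUnit_of_mul_isUnit_right h2a
    refine ⟨?_, .sq a⟩
    simpa only [sq, mul_assoc] using h2a.mul ha
  · rintro ⟨hunit, a, rfl⟩
    have h2a : IsUnit (2 * a) := by
      rw [← mul_assoc] at hunit
      exact isUnit_of_mul_isUnit_left hunit
    obtain ⟨b, hab⟩ := h2a.exists_right_inv
    exact ⟨_, a, b, rfl, sq a, hab⟩

end JordanBlock

theorem sqrt_of_jordan_block (p : ℕ) [Fact p.Prime] (hp : p ≠ 2)
    (lam : ZMod p) (hlam : lam ≠ 0) :
    (∃ B : Matrix (Fin 2) (Fin 2) (ZMod p), B ^ 2 = !![lam, 1; 0, lam]) ↔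
      IsSquare lam := by
  have two_ne_zero : (2 : ZMod p) ≠ 0 := Ring.two_ne_zero (by rwa [ZMod.ringChar_zmod_n])
  exact (sqrt_of_jordan_block_general lam).trans
    (and_iff_right (mul_ne_zero two_ne_zero hlam).isUnit)
end

section
/- Let p be an odd prime and let A be an element of Matrix.SpecialLinearGroup (Fin 2) (ZMod p) whose underlying matrix is diagonalizable over ZMod p with two distinct eigenvalues λ₁ ≠ λ₂ in ZMod p: there is an invertible 2×2 matrix P over ZMod p with (A : Matrix (Fin 2) (Fin 2) (ZMod p)) = P * Matrix.diagonal ![λ₁, λ₂] * P⁻¹ (necessarily λ₁ * λ₂ = 1). Then there exists B in Matrix.SpecialLinearGroup (Fin 2) (ZMod p) with B^2 = A if and only if IsSquare λ₁ and IsSquare λ₂ hold in ZMod p. -/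
/-!
A square root `B` of `A` commutes with `A`, so in an eigenbasis of `A` it commutes with a diagonal
matrix with distinct entries and is itself diagonal; its diagonal entries are then square roots of
the eigenvalues. Conversely, square roots of the eigenvalues assemble to a diagonal matrix whose
determinant squares to `det A = 1`, so it is `±1`, and changing the sign of one of the roots, if
necessary, makes it `1`.
-/

open Matrix

section CommSemiring

variable {n R : Type*} [Fintype n] [DecidableEq n] [CommSemiring R] [IsCancelMulZero R]
  {C : Matrix n n R} {d : n → R}

theorem isDiag_of_commute_diagonal (hd : Function.Injective d) (h : Commute C (diagonal d)) :
    C.IsDiag := by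
  intro i j hij
  by_contra hC
  have hentry : C i j * d j = C i j * d i := by
    simpa only [mul_diagonal, diagonal_mul, mul_comm (d i)] using congr_fun₂ h.eq i j
  exact hij (hd (mul_left_cancel₀ hC hentry)).symm

theorem diag_pow_eq_of_pow_eq_diagonal {k : ℕ} (hd : Function.Injective d)
    (h : C ^ k = diagonal d) : C.diag ^ k = d := by
  have hC : C.IsDiag := isDiag_of_commute_diagonal hd (h ▸ Commute.self_pow C k)
  apply diagonal_injective
  rw [← diagonal_pow, hC.diagonal_diag, h]

end CommSemiring

theorem exists_sq_eq_and_prod_eq_one {ι R : Type*} [Fintype ι] [CommRing R] [NoZeroDivisors R]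
    {d : ι → R} (hd : ∏ i, d i = 1) (hsq : ∀ i, IsSquare (d i)) :
    ∃ r : ι → R, r ^ 2 = d ∧ ∏ i, r i = 1 := by
  classical
  choose s hs using fun i ↦ (hsq i).exists_sq
  have hs_sq : s ^ 2 = d := funext fun i ↦ (hs i).symm
  have hprod : (∏ i, s i) ^ 2 = 1 := by simp only [← Finset.prod_pow, ← hs, hd]
  rcases isEmpty_or_nonempty ι with _ | ⟨⟨i⟩⟩
  · exact ⟨s, hs_sq, Fintype.prod_empty s⟩
  rcases sq_eq_one_iff.mp hprod with hone | hneg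
  · exact ⟨s, hs_sq, hone⟩
  · refine ⟨s * Pi.mulSingle i (-1), ?_, ?_⟩
    · rw [mul_pow, hs_sq, ← Pi.mulSingle_pow, neg_one_sq, Pi.mulSingle_one, mul_one]
    · simp only [Pi.mul_apply, Finset.prod_mul_distrib, hneg, Fintype.prod_pi_mulSingle',
        neg_mul_neg, one_mul]

theorem sqrt_of_diagonalizable_SL2_general {n R : Type*} [Fintype n] [DecidableEq n] [CommRing R]
    [IsDomain R] (A : SpecialLinearGroup n R) {d : n → R} (hd : Function.Injective d)
    (hdiag : ∃ P : Matrix n n R, IsUnit P ∧ (A : Matrix n n R) = P * diagonal d * P⁻¹) :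
    (∃ B : SpecialLinearGroup n R, B ^ 2 = A) ↔ ∀ i, IsSquare (d i) := by
  obtain ⟨_, ⟨P, rfl⟩, hA⟩ := hdiag
  rw [← coe_units_inv] at hA
  constructor
  · rintro ⟨B, rfl⟩ i
    have hB : (B : Matrix n n R) ^ 2 = P * diagonal d * P⁻¹.val := hA
    have hconj : (P⁻¹.val * B * P) ^ 2 = diagonal d := by
      rw [P.conj_pow', hB]
      simp only [mul_assoc, Units.inv_mul, mul_one, Units.inv_mul_cancel_left]
    rw [← diag_pow_eq_of_pow_eq_diagonal hd hconj]
    exact IsSquare.sq _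
  · intro hsq
    have hprod : ∏ i, d i = 1 := by rw [← det_diagonal, ← det_units_conj P, ← hA, A.det_coe]
    obtain ⟨r, rfl, hr⟩ := exists_sq_eq_and_prod_eq_one hprod hsq
    have hdet : (P * diagonal r * P⁻¹.val).det = 1 := by rw [det_units_conj, det_diagonal, hr]
    have hsquare : (P * diagonal r * P⁻¹.val) ^ 2 = A := by rw [P.conj_pow, diagonal_pow, hA]
    exact ⟨⟨_, hdet⟩, Subtype.ext hsquare⟩

theorem sqrt_of_diagonalizable_SL2 (p : ℕ) [Fact p.Prime] (hp : p ≠ 2)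
    (A : Matrix.SpecialLinearGroup (Fin 2) (ZMod p)) (lam₁ lam₂ : ZMod p)
    (hne : lam₁ ≠ lam₂)
    (hdiag : ∃ P : Matrix (Fin 2) (Fin 2) (ZMod p), IsUnit P ∧
      (A : Matrix (Fin 2) (Fin 2) (ZMod p)) = P * Matrix.diagonal ![lam₁, lam₂] * P⁻¹) :
    (∃ B : Matrix.SpecialLinearGroup (Fin 2) (ZMod p), B ^ 2 = A) ↔
      IsSquare lam₁ ∧ IsSquare lam₂ := by
  have hinj : Function.Injective ![lam₁, lam₂] := by simpa using hne
  simpa using sqrt_of_diagonalizable_SL2_general A hinj hdiag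
end

section
/- Let p be an odd prime and let A be an element of Matrix.SpecialLinearGroup (Fin 2) (ZMod p) whose underlying matrix is diagonalizable over ZMod p with eigenvalues λ₁, λ₂ in ZMod p that are both non-squares (¬IsSquare λ₁ and ¬IsSquare λ₂): there is an invertible 2×2 matrix P over ZMod p with (A : Matrix (Fin 2) (Fin 2) (ZMod p)) = P * Matrix.diagonal ![λ₁, λ₂] * P⁻¹. Then there exists B in Matrix.SpecialLinearGroup (Fin 2) (ZMod p) with B^2 = A if and only if λ₁ = λ₂, i.e. if and only if A is a scalar matrix. -/
/-!
A square root `B` of `A` commutes with `A`. If `lam₁ ≠ lam₂`, then `B` is therefore diagonal in the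
basis of eigenvectors in which `A` becomes `diag(lam₁, lam₂)`, and its diagonal entries would be
square roots of the eigenvalues, which do not exist. If `lam₁ = lam₂`, then
`det A = lam₁ ^ 2 = 1`, so `A = ±1`; the sign is `-1` because `1` is a square, and `-1` is the
square of the rotation by a right angle.
-/

open Matrix
open scoped MatrixGroups

section Diagonal

variable {n R : Type*} [Fintype n] [DecidableEq n] [CommRing R] [NoZeroDivisors R]

theorem apply_eq_zero_of_commute_diagonal {M : Matrix n n R} {d : n → R}
    (hM : Commute M (diagonal d)) {i j : n} (hij : d i ≠ d j) : M i j = 0 := by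
  have hentry : M i j * d j = d i * M i j := by
    simpa only [mul_diagonal, diagonal_mul] using congr_fun₂ hM.eq i j
  have hprod : (d i - d j) * M i j = 0 := by linear_combination -hentry
  exact (mul_eq_zero.mp hprod).resolve_left (sub_ne_zero.mpr hij)

theorem isSquare_of_sq_eq_diagonal {M : Matrix n n R} {d : n → R}
    (hM : M ^ 2 = diagonal d) {i : n} (hi : ∀ j ≠ i, d i ≠ d j) : IsSquare (d i) := by
  have hcomm : Commute M (diagonal d) := hM ▸ Commute.self_pow M 2
  refine ⟨M i i, ?_⟩
  calc
    d i = (M * M) i i := by rw [← sq, hM, diagonal_apply_eq]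
    _ = ∑ j, M i j * M j i := mul_apply
    _ = M i i * M i i := Fintype.sum_eq_single i fun j hj ↦ by
      rw [apply_eq_zero_of_commute_diagonal hcomm (hi j hj), zero_mul]

theorem isSquare_of_sq_eq_conj_diagonal {M P : Matrix n n R} {d : n → R} (hP : IsUnit P)
    (hM : M ^ 2 = P * diagonal d * P⁻¹) {i : n} (hi : ∀ j ≠ i, d i ≠ d j) : IsSquare (d i) := by
  obtain ⟨u, rfl⟩ := hP
  refine isSquare_of_sq_eq_diagonal (M := u⁻¹.val * M * u.val) ?_ hi
  rw [Units.conj_pow', hM, ← coe_units_inv]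
  simp only [mul_assoc, Units.inv_mul_cancel_left, Units.inv_mul, mul_one]

end Diagonal

theorem conj_scalar {n R : Type*} [Fintype n] [DecidableEq n] [CommRing R] {P : Matrix n n R}
    (hP : IsUnit P) (c : R) : P * scalar n c * P⁻¹ = scalar n c := by
  rw [← (scalar_commute c (Commute.all c) P).eq,
    mul_nonsing_inv_cancel_right P _ ((isUnit_iff_isUnit_det P).mp hP)]

section SpecialLinearGroup

variable {R : Type*} [CommRing R]

theorem isSquare_neg_one_SL2 : IsSquare (-1 : SL(2, R)) := by
  have hS : IsSquare (-1 : SL(2, ℤ)) :=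
    ⟨ModularGroup.S, Subtype.ext ModularGroup.S_mul_S_eq.symm⟩
  simpa using hS.map (Matrix.SpecialLinearGroup.map (Int.castRingHom R))

theorem eq_neg_one_of_coe_eq_scalar [NoZeroDivisors R] {A : SL(2, R)} {c : R}
    (hc : ¬ IsSquare c) (hA : (A : Matrix (Fin 2) (Fin 2) R) = scalar (Fin 2) c) : A = -1 := by
  have hc_sq : c ^ 2 = 1 := by simpa [hA] using A.det_coe
  have hc_neg : c = -1 := (sq_eq_one_iff.mp hc_sq).resolve_left fun h ↦ hc (h ▸ .one)
  refine Subtype.ext (hA.trans ?_)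
  rw [hc_neg, map_neg, map_one, Matrix.SpecialLinearGroup.coe_neg,
    Matrix.SpecialLinearGroup.coe_one]

end SpecialLinearGroup

theorem sqrt_of_diagonalizable_SL2_nonsquare_eigenvalues_general {R : Type*} [CommRing R]
    [NoZeroDivisors R] (A : SL(2, R)) (lam₁ lam₂ : R) (h₁ : ¬ IsSquare lam₁)
    (hdiag : ∃ P : Matrix (Fin 2) (Fin 2) R, IsUnit P ∧
      (A : Matrix (Fin 2) (Fin 2) R) = P * diagonal ![lam₁, lam₂] * P⁻¹) :
    (∃ B : SL(2, R), B ^ 2 = A) ↔ lam₁ = lam₂ := by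
  obtain ⟨P, hP, hA⟩ := hdiag
  constructor
  · rintro ⟨B, rfl⟩
    by_contra hne
    rw [Matrix.SpecialLinearGroup.coe_pow] at hA
    exact h₁ (isSquare_of_sq_eq_conj_diagonal hP hA (i := 0) (by simpa [Fin.forall_fin_two]))
  · rintro rfl
    have hscalar : diagonal ![lam₁, lam₁] = scalar (Fin 2) lam₁ := by simp [scalar_apply]
    rw [hscalar, conj_scalar hP] at hA
    obtain ⟨B, hB⟩ := (isSquare_neg_one_SL2 (R := R)).exists_sq
    exact ⟨B, hB.symm.trans (eq_neg_one_of_coe_eq_scalar h₁ hA).symm⟩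

theorem sqrt_of_diagonalizable_SL2_nonsquare_eigenvalues (p : ℕ) [Fact p.Prime] (hp : p ≠ 2)
    (A : Matrix.SpecialLinearGroup (Fin 2) (ZMod p)) (lam₁ lam₂ : ZMod p)
    (h₁ : ¬ IsSquare lam₁) (h₂ : ¬ IsSquare lam₂)
    (hdiag : ∃ P : Matrix (Fin 2) (Fin 2) (ZMod p), IsUnit P ∧
      (A : Matrix (Fin 2) (Fin 2) (ZMod p)) = P * Matrix.diagonal ![lam₁, lam₂] * P⁻¹) :
    (∃ B : Matrix.SpecialLinearGroup (Fin 2) (ZMod p), B ^ 2 = A) ↔ lam₁ = lam₂ :=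
  sqrt_of_diagonalizable_SL2_nonsquare_eigenvalues_general A lam₁ lam₂ h₁ hdiag
end

section
/- Let p be a prime and let A be a 2×2 matrix over ZMod p whose characteristic polynomial Matrix.charpoly A is irreducible over ZMod p (so A is invertible and semisimple, with a pair of conjugate eigenvalues in the quadratic extension GaloisField p 2). Then there exists a 2×2 matrix B over ZMod p with B^2 = A if and only if there exists λ : GaloisField p 2 which is a root of the characteristic polynomial of A mapped to GaloisField p 2 (i.e. Polynomial.aeval λ (Matrix.charpoly A) = 0) and which satisfies IsSquare λ in GaloisField p 2. -/
/-!
If `f(b) = a` and the minimal polynomial of `b` has degree at most that of `a`, then `F[a] ⊆ F[b]`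
are of equal dimension, so `b = q(a)` for some polynomial `q`, and `f(q(a)) = a` says that
`minpoly a` divides `f ∘ q - X`. Solvability of `f(b) = a` thus depends on `minpoly a` alone,
provided no element of the ambient algebra has a minimal polynomial of larger degree. A matrix with
irreducible characteristic polynomial of degree `n` and a root of that polynomial in a field
extension of degree `n` both satisfy this proviso, and they have the same minimal polynomial.
-/

open Polynomial

section Algebra

variable {F R : Type*} [Field F] [Ring R] [Algebra F R]

theorem finrank_adjoin_singleton_eq_natDegree_minpoly (b : R) :
    Module.finrank F (Algebra.adjoin F {b}) = (minpoly F b).natDegree := by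
  have quotientEquiv :=
    Ideal.quotientEquivAlgOfEq F (minpoly.ker_aeval_eq_span_minpoly F b)
  rw [Algebra.adjoin_singleton_eq_range_aeval,
    ← (Ideal.quotientKerEquivRange (aeval b : F[X] →ₐ[F] R)).toLinearEquiv.finrank_eq,
    quotientEquiv.toLinearEquiv.finrank_eq]
  exact finrank_quotient_span_eq_natDegree

theorem mem_adjoin_aeval_of_natDegree_minpoly_le {b : R} (hb : IsIntegral F b) {f : F[X]}
    (hdeg : (minpoly F b).natDegree ≤ (minpoly F (aeval b f)).natDegree) :
    b ∈ Algebra.adjoin F {aeval b f} := by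
  have hle : Algebra.adjoin F {aeval b f} ≤ Algebra.adjoin F {b} :=
    Algebra.adjoin_singleton_le (aeval_mem_adjoin_singleton F b)
  have : FiniteDimensional F (Subalgebra.toSubmodule (Algebra.adjoin F {b})) :=
    Module.Finite.iff_fg.2 hb.fg_adjoin_singleton
  have heq : Algebra.adjoin F {aeval b f} = Algebra.adjoin F {b} :=
    Subalgebra.toSubmodule_injective <| Submodule.eq_of_le_of_finrank_le hle <| by
      simpa only [Subalgebra.finrank_toSubmodule, finrank_adjoin_singleton_eq_natDegree_minpoly]
        using hdeg
  exact heq ▸ Algebra.self_mem_adjoin_singleton F b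

theorem exists_aeval_eq_iff_exists_minpoly_dvd [Algebra.IsIntegral F R] {a : R}
    (hdeg : ∀ b : R, (minpoly F b).natDegree ≤ (minpoly F a).natDegree) (f : F[X]) :
    (∃ b : R, aeval b f = a) ↔ ∃ q : F[X], minpoly F a ∣ f.comp q - X := by
  have dvd_iff (q : F[X]) : minpoly F a ∣ f.comp q - X ↔ aeval (aeval a q) f = a := by
    rw [minpoly.dvd_iff, map_sub, aeval_comp, aeval_X, sub_eq_zero]
  simp only [dvd_iff]
  refine ⟨?_, fun ⟨q, hq⟩ ↦ ⟨aeval a q, hq⟩⟩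
  rintro ⟨b, rfl⟩
  obtain ⟨q, hq⟩ := Algebra.adjoin_mem_exists_aeval F _ <|
    mem_adjoin_aeval_of_natDegree_minpoly_le (Algebra.IsIntegral.isIntegral b) (hdeg b)
  exact ⟨q, by rw [hq]⟩

end Algebra

theorem natDegree_minpoly_matrix_le {F n : Type*} [Field F] [Fintype n] [DecidableEq n]
    (B : Matrix n n F) : (minpoly F B).natDegree ≤ Fintype.card n :=
  B.charpoly_natDegree_eq_dim ▸
    natDegree_le_of_dvd (Matrix.minpoly_dvd_charpoly B) B.charpoly_monic.ne_zero

theorem exists_aeval_eq_zero_of_natDegree_dvd_finrank {F L : Type*} [Field F] [Field L] [Finite L]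
    [Algebra F L] {g : F[X]} (hg : Irreducible g) (hdvd : g.natDegree ∣ Module.finrank F L) :
    ∃ x : L, aeval x g = 0 := by
  have : Fact (Irreducible g) := ⟨hg⟩
  have hfinrank : Module.finrank F (AdjoinRoot g) = g.natDegree :=
    finrank_quotient_span_eq_natDegree
  obtain ⟨φ⟩ : Nonempty (AdjoinRoot g →ₐ[F] L) :=
    FiniteField.nonempty_algHom_of_finrank_dvd (hfinrank ▸ hdvd)
  exact ⟨φ (AdjoinRoot.root g), by
    rw [aeval_algHom_apply, AdjoinRoot.aeval_eq, AdjoinRoot.mk_self, map_zero]⟩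

section Matrix

variable {F L n : Type*} [Field F] [Field L] [Algebra F L] [Fintype n] [DecidableEq n]
  {A : Matrix n n F}

theorem exists_aeval_eq_iff_of_aeval_charpoly_eq_zero (hA : Irreducible A.charpoly)
    (hL : Module.finrank F L = Fintype.card n) {lam : L} (hlam : aeval lam A.charpoly = 0)
    (f : F[X]) :
    (∃ B : Matrix n n F, aeval B f = A) ↔ ∃ mu : L, aeval mu f = lam := by
  have hpos : 0 < Fintype.card n := A.charpoly_natDegree_eq_dim ▸ hA.natDegree_pos
  have : Nonempty n := Fintype.card_pos_iff.1 hpos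
  have : FiniteDimensional F L := Module.finite_of_finrank_pos (hL ▸ hpos)
  have minpoly_matrix : minpoly F A = A.charpoly :=
    (minpoly.eq_of_irreducible_of_monic hA A.aeval_self_charpoly A.charpoly_monic).symm
  have minpoly_root : minpoly F lam = A.charpoly :=
    (minpoly.eq_of_irreducible_of_monic hA hlam A.charpoly_monic).symm
  rw [exists_aeval_eq_iff_exists_minpoly_dvd, exists_aeval_eq_iff_exists_minpoly_dvd,
    minpoly_matrix, minpoly_root]
  · intro mu
    rw [minpoly_root, A.charpoly_natDegree_eq_dim, ← hL]
    exact minpoly.natDegree_le mu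
  · intro B
    rw [minpoly_matrix, A.charpoly_natDegree_eq_dim]
    exact natDegree_minpoly_matrix_le B

theorem sqrt_criterion_irreducible_charpoly_general (hA : Irreducible A.charpoly)
    (hL : Module.finrank F L = Fintype.card n) (hroot : ∃ lam : L, aeval lam A.charpoly = 0)
    (f : F[X]) :
    (∃ B : Matrix n n F, aeval B f = A) ↔
      ∃ lam : L, aeval lam A.charpoly = 0 ∧ ∃ mu : L, aeval mu f = lam := by
  constructor
  · obtain ⟨lam, hlam⟩ := hroot
    exact fun hB ↦
      ⟨lam, hlam, (exists_aeval_eq_iff_of_aeval_charpoly_eq_zero hA hL hlam f).1 hB⟩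
  · rintro ⟨lam, hlam, hmu⟩
    exact (exists_aeval_eq_iff_of_aeval_charpoly_eq_zero hA hL hlam f).2 hmu

end Matrix

theorem sqrt_criterion_irreducible_charpoly (p : ℕ) [Fact p.Prime]
    (A : Matrix (Fin 2) (Fin 2) (ZMod p)) (hA : Irreducible (Matrix.charpoly A)) :
    (∃ B : Matrix (Fin 2) (Fin 2) (ZMod p), B ^ 2 = A) ↔
      ∃ lam : GaloisField p 2,
        Polynomial.aeval lam (Matrix.charpoly A) = 0 ∧ IsSquare lam := by
  have hL : Module.finrank (ZMod p) (GaloisField p 2) = 2 := GaloisField.finrank p two_ne_zero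
  have solvable_iff := sqrt_criterion_irreducible_charpoly_general hA hL
    (exists_aeval_eq_zero_of_natDegree_dvd_finrank hA (by simp [hL])) (X ^ 2)
  simpa only [aeval_X_pow, isSquare_iff_exists_sq, eq_comm] using solvable_iff
end
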